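/- arXiv:2007.04031 — 4 statements merged into one kernel-verified Lean document; each statement's English description precedes it below -/
import Mathlib

section
/- An integer linear recurrence sequence (a_n)_{n≥1} is a rational multiple of a Dold sequence (i.e., there exist a nonzero rational q and an integer Dold sequence (d_n)_{n≥1} with a_n = q·d_n for all n ≥ 1) if and only if it is a trace sequence, meaning that there exist an algebraic number field K, rational numbers b_1, …, b_r, and algebraic integers θ_1, …, θ_r in K such that a_n = ∑_{i=1}^{r} b_i · Tr_{K/ℚ}(θ_i^n) for all n ≥ 1. -/
/-- A sequence `(a n)` of integers (indexed by `n ≥ 1`) is a Dold sequence if for every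
`n ≥ 1`, `n` divides `∑_{d ∣ n} μ(n/d) · a d`. -/
def DoldSeq (a : ℕ → ℤ) : Prop :=
  ∀ n : ℕ, 1 ≤ n →
    (n : ℤ) ∣ ∑ d ∈ n.divisors, ArithmeticFunction.moebius (n / d) * a d

/-- A sequence `(a n)` satisfies a linear recurrence (with rational constant coefficients,
of some order `p ≥ 1`, with lowest coefficient nonzero) for `n ≥ 1`. -/
def IsLinearRecurrenceSeq (a : ℕ → ℤ) : Prop :=
  ∃ (p : ℕ) (α : ℕ → ℚ), 1 ≤ p ∧ α 0 ≠ 0 ∧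
    ∀ n : ℕ, 1 ≤ n → (a (n + p) : ℚ) = ∑ i ∈ Finset.range p, α i * (a (n + i) : ℚ)

/-- A witness that `(a n)` is a trace sequence: a number field `K`, rationals
`b 1, …, b r` and algebraic integers `θ 1, …, θ r` of `K` with
`a n = ∑ i, b i · Tr_{K/ℚ} (θ i ^ n)` for all `n ≥ 1`. -/
structure TraceSequenceWitness (a : ℕ → ℤ) where
  K : Type
  [instField : Field K]
  [instNumberField : NumberField K]
  r : ℕ
  b : Fin r → ℚ
  θ : Fin r → NumberField.RingOfIntegers K
  htrace : ∀ n : ℕ, 1 ≤ n →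
    (a n : ℚ) = ∑ i : Fin r, b i * Algebra.trace ℚ K ((θ i : K) ^ n)

section Helpers
open NumberField

theorem absNorm_eq_of_frob (E : Type) [Field E] [NumberField E] (p : ℕ) (hp : p.Prime) (q : Ideal (𝓞 E))
    (hq : q.IsPrime) (hpq : (p : 𝓞 E) ∈ q) (h : ∀ x : 𝓞 E, x ^ p - x ∈ q) : Ideal.absNorm q = p := by
  classical
  have hq0 : q ≠ ⊥ := by
    rintro rfl
    simp at hpq
    exact hp.ne_zero hpq
  have hmax : q.IsMaximal := hq.isMaximal hq0
  have hle : Ideal.absNorm q ≤ p := by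
    rw [Ideal.absNorm_apply, Submodule.cardQuot_apply]
    let : Field (𝓞 E ⧸ q) := Ideal.Quotient.field q
    have hfin : Finite (𝓞 E ⧸ q) := Ideal.finiteQuotientOfFreeOfNeBot q hq0
    let : Fintype (𝓞 E ⧸ q) := Fintype.ofFinite _
    rw [Nat.card_eq_fintype_card]
    have hd : (Polynomial.X ^ p - Polynomial.X : Polynomial (𝓞 E ⧸ q)).natDegree = p :=
      FiniteField.X_pow_card_sub_X_natDegree_eq _ hp.one_lt
    have hne : (Polynomial.X ^ p - Polynomial.X : Polynomial (𝓞 E ⧸ q)) ≠ 0 :=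
      FiniteField.X_pow_card_sub_X_ne_zero _ hp.one_lt
    have := Polynomial.card_roots' (Polynomial.X ^ p - Polynomial.X : Polynomial (𝓞 E ⧸ q))
    rw [hd] at this
    refine le_trans ?_ this
    refine le_trans ?_ (Multiset.toFinset_card_le _)
    rw [← Finset.card_univ]
    apply Finset.card_le_card
    intro y _
    obtain ⟨x, rfl⟩ := Ideal.Quotient.mk_surjective y
    simp only [Multiset.mem_toFinset, Polynomial.mem_roots hne, Polynomial.IsRoot, Polynomial.eval_sub, Polynomial.eval_pow, Polynomial.eval_X]
    rw [← map_pow, ← map_sub, Ideal.Quotient.eq_zero_iff_mem]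
    exact h x
  have hdvd : Ideal.absNorm q ∣ p ^ Module.finrank ℤ (𝓞 E) := by
    rw [← Ideal.absNorm_span_natCast]
    exact Ideal.absNorm_dvd_absNorm_of_le ((Ideal.span_singleton_le_iff_mem _).2 hpq)
  obtain ⟨k, -, hk⟩ := (Nat.dvd_prime_pow hp).1 hdvd
  have hk0 : k ≠ 0 := by
    rintro rfl
    rw [pow_zero, Ideal.absNorm_eq_one_iff] at hk
    exact hq.ne_top hk
  have : p ^ 1 ≤ p ^ k := Nat.pow_le_pow_right hp.pos (by omega)
  rw [pow_one] at this
  omega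

theorem exists_two_primes (E : Type) [Field E] [NumberField E] (hn : 2 ≤ Module.finrank ℚ E) (p : ℕ) (hp : p.Prime)
    (hd : ¬ p ∣ (discr E).natAbs)
    (h : ∀ q : Ideal (𝓞 E), q.IsPrime → (p : 𝓞 E) ∈ q → ∀ x : 𝓞 E, x ^ p - x ∈ q) :
    ∃ P Q : Ideal (𝓞 E), Prime P ∧ Prime Q ∧ P ≠ Q ∧ Ideal.absNorm P = p ∧ Ideal.absNorm Q = p := by
  have hprime : ∀ q : Ideal (𝓞 E), q.IsPrime → (p : 𝓞 E) ∈ q → Prime q := by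
    intro q hq hpq
    apply Ideal.prime_of_isPrime _ hq
    rintro rfl
    simp at hpq
    exact hp.ne_zero hpq
  have hnorm : (Ideal.span {(p : 𝓞 E)}).absNorm = p ^ Module.finrank ℚ E := by
    rw [Ideal.absNorm_span_natCast, RingOfIntegers.rank]
  have hne : Ideal.span {(p : 𝓞 E)} ≠ ⊤ := by
    intro he
    rw [he, Ideal.absNorm_top] at hnorm
    exact (Nat.one_lt_pow (by omega) hp.one_lt).ne hnorm
  obtain ⟨P, hPm, hPle⟩ := Ideal.exists_le_maximal _ hne
  have hpP : (p : 𝓞 E) ∈ P := (Ideal.span_singleton_le_iff_mem _).1 hPle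
  have hPn := absNorm_eq_of_frob E p hp P hPm.isPrime hpP (h P hPm.isPrime hpP)
  obtain ⟨J, hJ⟩ := Ideal.dvd_iff_le.2 hPle
  have hJn : J ≠ ⊤ := by
    rintro rfl
    rw [Ideal.mul_top] at hJ
    rw [hJ, hPn] at hnorm
    have : p ^ 1 < p ^ Module.finrank ℚ E := Nat.pow_lt_pow_right hp.one_lt (by omega)
    rw [pow_one] at this
    omega
  obtain ⟨Q, hQm, hQle⟩ := Ideal.exists_le_maximal _ hJn
  have hpQ : (p : 𝓞 E) ∈ Q := by
    apply hQle
    apply Ideal.mul_le_right (I := P)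
    rw [← hJ]; exact Ideal.mem_span_singleton_self _
  refine ⟨P, Q, hprime _ hPm.isPrime hpP, hprime _ hQm.isPrime hpQ, ?_, hPn, absNorm_eq_of_frob E p hp Q hQm.isPrime hpQ (h Q hQm.isPrime hpQ)⟩
  rintro rfl
  have hdv : P ^ 2 ∣ (Ideal.span {(p : ℤ)}).map (algebraMap ℤ (𝓞 E)) := by
    rw [Ideal.map_span, Set.image_singleton]
    simp only [map_natCast]
    rw [hJ, pow_two]
    exact mul_dvd_mul_left _ (Ideal.dvd_iff_le.2 hQle)
  have hpi : Prime (p : ℤ) := Nat.prime_iff_prime_int.1 hp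
  have : (Ideal.span {(p : ℤ)}).IsMaximal := 
    PrincipalIdealRing.isMaximal_of_irreducible hpi.irreducible
  have hdiff := pow_sub_one_dvd_differentIdeal (A := ℤ) P 2 (by simpa using hp.ne_zero) hdv
  rw [Nat.add_one_sub_one, pow_one] at hdiff
  have := Ideal.absNorm_dvd_absNorm_of_le (Ideal.dvd_iff_le.mp hdiff)
  rw [absNorm_differentIdeal E, hPn] at this
  exact hd this

theorem harmonic_pairs (Y : ℕ) : (Y : ℝ) * ((harmonic Y : ℚ) - 1 : ℝ) ≤ 
    ((Finset.Icc 1 Y).sigma (fun i => Finset.Icc 1 (Y / i))).card := by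
  rw [Finset.card_sigma]
  simp only [Nat.card_Icc, Nat.add_sub_cancel]
  rw [harmonic_eq_sum_Icc]
  push_cast
  rw [mul_sub, Finset.mul_sum]
  have : (Y : ℝ) * 1 = ∑ i ∈ Finset.Icc 1 Y, (1:ℝ) := by simp
  rw [this, ← Finset.sum_sub_distrib]
  apply Finset.sum_le_sum
  intro i hi
  have := Nat.lt_div_mul_add (a := Y) (b := i) (by simp at hi; omega)
  have hi0 : (0:ℝ) < i := by simp at hi; exact_mod_cast (by omega : 0 < i)
  have h2 : (Y:ℝ) < (Y / i : ℕ) * i + i := by exact_mod_cast this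
  have : (Y:ℝ) * (i:ℝ)⁻¹ ≤ (Y / i : ℕ) + 1 := by
    rw [mul_inv_le_iff₀ hi0]; nlinarith
  linarith

theorem two_primes_contra (E : Type) [Field E] [NumberField E] (P₁ : ℕ) (P Q : ℕ → Ideal (𝓞 E))
    (h : ∀ p, p.Prime → P₁ ≤ p → Prime (P p) ∧ Prime (Q p) ∧ P p ≠ Q p ∧
      Ideal.absNorm (P p) = p ∧ Ideal.absNorm (Q p) = p) : False := by
  classical
  set B : ℕ := P₁.factorial with hB
  have hBp : 0 < B := Nat.factorial_pos _
  let u : ℕ → ℕ := fun i => 1 + B * i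
  have hu : ∀ i, ∀ p ∈ (u i).primeFactorsList, p.Prime ∧ P₁ ≤ p := by
    intro i p hp
    have hpp := Nat.prime_of_mem_primeFactorsList hp
    refine ⟨hpp, ?_⟩
    by_contra hlt
    push Not at hlt
    have h1 : p ∣ B := Nat.dvd_factorial hpp.pos hlt.le
    have h2 : p ∣ 1 + B * i := Nat.dvd_of_mem_primeFactorsList hp
    have h3 : p ∣ 1 := (Nat.dvd_add_left (h1.mul_right i)).1 h2
    exact hpp.one_lt.ne' (Nat.dvd_one.1 h3)
  have hu0 : ∀ i, u i ≠ 0 := fun i => by simp [u]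
  let M : ℕ → ℕ → Multiset (Ideal (𝓞 E)) := fun i j =>
    Multiset.map P ((u i).primeFactorsList : Multiset ℕ) + Multiset.map Q ((u j).primeFactorsList : Multiset ℕ)
  have hMprime : ∀ i j, ∀ J ∈ M i j, Prime J := by
    intro i j J hJ
    simp only [M, Multiset.mem_add, Multiset.mem_map, Multiset.mem_coe] at hJ
    rcases hJ with ⟨p, hp, rfl⟩ | ⟨p, hp, rfl⟩
    · exact (h p (hu _ p hp).1 (hu _ p hp).2).1
    · exact (h p (hu _ p hp).1 (hu _ p hp).2).2.1
  have hMnorm : ∀ i j, Ideal.absNorm (M i j).prod = u i * u j := by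
    intro i j
    rw [map_multiset_prod]
    simp only [M, Multiset.map_add, Multiset.map_map, Multiset.prod_add]
    congr 1
    · rw [Multiset.map_congr rfl (g := id)]
      · simp [Nat.prod_primeFactorsList (hu0 i)]
      · intro p hp
        have := hu i p (by simpa using hp)
        exact (h p this.1 this.2).2.2.2.1
    · rw [Multiset.map_congr rfl (g := id)]
      · simp [Nat.prod_primeFactorsList (hu0 j)]
      · intro p hp
        have := hu j p (by simpa using hp)
        exact (h p this.1 this.2).2.2.2.2
  have key : ∀ i j, Multiset.map Ideal.absNorm (Multiset.filter (fun J => J = P (Ideal.absNorm J)) (M i j))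
      = ((u i).primeFactorsList : Multiset ℕ) := by
    intro i j
    simp only [M, Multiset.filter_add]
    rw [Multiset.filter_eq_self.2, Multiset.filter_eq_nil.2]
    · rw [add_zero, Multiset.map_map, Multiset.map_congr rfl (g := id)]
      · simp
      · intro p hp
        have := hu i p (by simpa using hp)
        exact (h p this.1 this.2).2.2.2.1
    · intro J hJ
      simp only [Multiset.mem_map, Multiset.mem_coe] at hJ
      obtain ⟨p, hp, rfl⟩ := hJ
      have := hu j p hp
      have := h p this.1 this.2
      rw [this.2.2.2.2]; exact this.2.2.1.symm
    · intro J hJ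
      simp only [Multiset.mem_map, Multiset.mem_coe] at hJ
      obtain ⟨p, hp, rfl⟩ := hJ
      have := hu i p hp
      have := h p this.1 this.2
      rw [this.2.2.2.1]
  have hinj : ∀ i j i' j', (M i j).prod = (M i' j').prod → i = i' ∧ j = j' := by
    intro i j i' j' he
    have e1 := UniqueFactorizationMonoid.normalizedFactors_prod_of_prime (hMprime i j)
    have e2 := UniqueFactorizationMonoid.normalizedFactors_prod_of_prime (hMprime i' j')
    have e3 : M i j = M i' j' := by rw [← e1, ← e2, he]
    have e4 : ((u i).primeFactorsList : Multiset ℕ) = (u i').primeFactorsList := by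
      rw [← key i j, ← key i' j', e3]
    have e5 : u i = u i' := by
      rw [← Nat.prod_primeFactorsList (hu0 i), ← Nat.prod_primeFactorsList (hu0 i')]
      have := congrArg Multiset.prod e4
      simpa using this
    have e6 : u i * u j = u i' * u j' := by rw [← hMnorm, ← hMnorm, he]
    rw [e5] at e6
    have e7 := Nat.eq_of_mul_eq_mul_left (Nat.pos_of_ne_zero (hu0 i')) e6
    simp only [u, add_right_inj] at e5 e7
    exact ⟨Nat.eq_of_mul_eq_mul_left hBp e5, Nat.eq_of_mul_eq_mul_left hBp e7⟩
  have hlim := NumberField.Ideal.tendsto_norm_le_div_atTop E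
  set κ := ((2 ^ InfinitePlace.nrRealPlaces E * (2 * Real.pi) ^ InfinitePlace.nrComplexPlaces E * Units.regulator E * classNumber E) /
        (Units.torsionOrder E * Real.sqrt |discr E|)) with hκ
  have hev := hlim.eventually (gt_mem_nhds (lt_add_one κ))
  have hBt : Filter.Tendsto (fun Y : ℕ => (((1 + B)^2 * Y : ℕ) : ℝ)) Filter.atTop Filter.atTop := by
    apply tendsto_natCast_atTop_atTop.comp
    exact Filter.tendsto_id.const_mul_atTop' (by positivity)
  have hev2 := hBt.eventually hev
  have hH : Filter.Tendsto (fun n : ℕ => ((harmonic n : ℚ) : ℝ)) Filter.atTop Filter.atTop := by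
    refine Filter.tendsto_atTop_mono (f := fun n : ℕ => Real.log ((n + 1 : ℕ) : ℝ)) (fun n => log_add_one_le_harmonic n) ?_
    exact Real.tendsto_log_atTop.comp (tendsto_natCast_atTop_atTop.comp (Filter.tendsto_add_atTop_nat 1))
  obtain ⟨Y, hY1, hY2, hY3⟩ := (hev2.and ((hH.eventually (Filter.eventually_gt_atTop ((κ + 1) * (1 + B)^2 + 1))).and (Filter.eventually_gt_atTop 0))).exists
  have hfin : Finite {I : Ideal (𝓞 E) // (Ideal.absNorm I : ℝ) ≤ (((1 + B)^2 * Y : ℕ) : ℝ)} := by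
    simp only [Nat.cast_le]
    exact Ideal.finite_setOfPred_absNorm_le _
  have hcard : ((Finset.Icc 1 Y).sigma (fun i => Finset.Icc 1 (Y / i))).card ≤ 
     Nat.card {I : Ideal (𝓞 E) // (Ideal.absNorm I : ℝ) ≤ (((1 + B)^2 * Y : ℕ) : ℝ)} := by
    let f : ((Finset.Icc 1 Y).sigma (fun i => Finset.Icc 1 (Y / i))) →
      {I : Ideal (𝓞 E) // (Ideal.absNorm I : ℝ) ≤ (((1 + B)^2 * Y : ℕ) : ℝ)} := fun x =>
      ⟨(M x.1.1 x.1.2).prod, by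
        rw [hMnorm, Nat.cast_le]
        obtain ⟨⟨i, j⟩, hx⟩ := x
        simp only [Finset.mem_sigma, Finset.mem_Icc] at hx
        obtain ⟨⟨hi, -⟩, hj, hj2⟩ := hx
        have h1 : i * j ≤ Y := by
          have := (Nat.le_div_iff_mul_le (by omega)).1 hj2
          linarith
        have h2 : u i ≤ (1 + B) * i := by simp only [u]; nlinarith
        have h3 : u j ≤ (1 + B) * j := by simp only [u]; nlinarith
        calc u i * u j ≤ ((1 + B) * i) * ((1 + B) * j) := Nat.mul_le_mul h2 h3
          _ = (1 + B)^2 * (i * j) := by ring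
          _ ≤ _ := Nat.mul_le_mul_left _ h1⟩
    have hf : Function.Injective f := by
      rintro ⟨⟨i, j⟩, hx⟩ ⟨⟨i', j'⟩, hx'⟩ he
      have := hinj i j i' j' (congrArg Subtype.val he)
      obtain ⟨rfl, rfl⟩ := this
      rfl
    have := Nat.card_le_card_of_injective f hf
    rwa [Nat.card_eq_fintype_card, Fintype.card_coe] at this
  have hh := harmonic_pairs Y
  have hY0 : (0:ℝ) < Y := by exact_mod_cast hY3
  have hc : (((Finset.Icc 1 Y).sigma (fun i => Finset.Icc 1 (Y / i))).card : ℝ) ≤ 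
     Nat.card {I : Ideal (𝓞 E) // (Ideal.absNorm I : ℝ) ≤ (((1 + B)^2 * Y : ℕ) : ℝ)} := by exact_mod_cast hcard
  rw [div_lt_iff₀ (by positivity)] at hY1
  push_cast at hY1 hc
  have : (Y:ℝ) * ((harmonic Y : ℚ) - 1 : ℝ) < (κ + 1) * ((1 + B)^2 * Y) := lt_of_le_of_lt (hh.trans hc) hY1
  nlinarith

theorem kron_frob (E : Type) [Field E] [NumberField E] (p : ℕ) (hp : p.Prime) (q : Ideal (𝓞 E))
    (hq : q.IsPrime) (hpq : (p : 𝓞 E) ∈ q) (γ x : 𝓞 E) (hγ : γ ^ p - γ ∈ q) (N : ℕ) (hN : 0 < N) (hNp : N < p)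
    (g : Polynomial ℤ) (hg : (N : 𝓞 E) * x = Polynomial.aeval γ g) : x ^ p - x ∈ q := by
  have := Fact.mk hp
  have hchar : CharP (𝓞 E ⧸ q) p := by
    have : CharP (𝓞 E ⧸ q) p ↔ True := by
      simp only [iff_true]
      apply (CharP.charP_iff_prime_eq_zero hp).2
      rw [← map_natCast (Ideal.Quotient.mk q), Ideal.Quotient.eq_zero_iff_mem]
      exact hpq
    exact this.2 trivial
  have key : ∀ y : 𝓞 E, y ^ p - y ∈ q ↔ Ideal.Quotient.mk q y ∈ RingHom.eqLocus (frobenius (𝓞 E ⧸ q) p) (RingHom.id _) := by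
    intro y
    rw [RingHom.mem_eqLocus, RingHom.id_apply, frobenius_def, ← map_pow, ← sub_eq_zero, ← map_sub, Ideal.Quotient.eq_zero_iff_mem]
  rw [key] at hγ ⊢
  have h1 : Ideal.Quotient.mk q (Polynomial.aeval γ g) ∈ RingHom.eqLocus (frobenius (𝓞 E ⧸ q) p) (RingHom.id _) := by
    rw [Polynomial.aeval_eq_sum_range, map_sum]
    apply sum_mem
    intro i _
    rw [zsmul_eq_mul, map_mul, map_intCast, map_pow]
    exact mul_mem (intCast_mem _ _) (pow_mem hγ _)
  rw [← hg, RingHom.mem_eqLocus, map_mul, map_mul, map_mul, map_natCast, map_natCast, RingHom.id_apply, RingHom.id_apply] at h1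
  rw [RingHom.mem_eqLocus, RingHom.id_apply]
  refine mul_left_cancel₀ ?_ h1
  rw [Ne, CharP.cast_eq_zero_iff _ p]
  exact Nat.not_dvd_of_pos_of_lt hN hNp

theorem int_normalize (f : Polynomial ℚ) : ∃ N : ℕ, 0 < N ∧ ∃ g : Polynomial ℤ,
    g.map (Int.castRingHom ℚ) = Polynomial.C (N : ℚ) * f := by
  obtain ⟨b, hb, hb'⟩ := IsLocalization.integerNormalization_spec (nonZeroDivisors ℤ) f
  have hb0 : b ≠ 0 := nonZeroDivisors.ne_zero hb
  have hb'' : (IsLocalization.integerNormalization (nonZeroDivisors ℤ) f).map (Int.castRingHom ℚ) = Polynomial.C (b : ℚ) * f := by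
    rw [← Polynomial.smul_eq_C_mul, Int.cast_smul_eq_zsmul]
    exact hb'
  refine ⟨b.natAbs, Int.natAbs_pos.2 hb0, Polynomial.C (b.sign) * IsLocalization.integerNormalization (nonZeroDivisors ℤ) f, ?_⟩
  rw [Polynomial.map_mul, hb'', ← mul_assoc, Polynomial.map_C, ← Polynomial.C_mul]
  congr 2
  rw [eq_intCast, ← Int.cast_mul, Int.sign_mul_self_eq_abs, Int.abs_eq_natAbs, Int.cast_natCast]

theorem exists_int_mul (E : Type) [Field E] [NumberField E] (γ x : 𝓞 E)
    (hx : (x : E) ∈ Algebra.adjoin ℚ {(γ : E)}) :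
    ∃ N : ℕ, 0 < N ∧ ∃ g : Polynomial ℤ, (N : 𝓞 E) * x = Polynomial.aeval γ g := by
  rw [Algebra.adjoin_singleton_eq_range_aeval] at hx
  obtain ⟨f, hf⟩ := hx
  obtain ⟨N, hN, g, hg⟩ := int_normalize f
  refine ⟨N, hN, g, ?_⟩
  apply RingOfIntegers.ext
  have h1 : Polynomial.aeval (γ : E) (g.map (algebraMap ℤ ℚ)) = (N : E) * x := by
    have : g.map (algebraMap ℤ ℚ) = Polynomial.C (N : ℚ) * f := hg
    rw [this, map_mul, Polynomial.aeval_C, map_natCast]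
    congr 1
  rw [Polynomial.aeval_map_algebraMap, Polynomial.aeval_algebraMap_apply] at h1
  change algebraMap (𝓞 E) E (N * x) = algebraMap (𝓞 E) E _
  rw [map_mul, map_natCast]
  exact h1.symm

theorem kronecker (L : Type) [Field L] [NumberField L] (γ : 𝓞 L) (P₀ : ℕ)
    (h : ∀ p : ℕ, p.Prime → P₀ ≤ p → ∀ q : Ideal (𝓞 L), q.IsPrime → (p : 𝓞 L) ∈ q → γ ^ p - γ ∈ q) :
    ∃ r : ℚ, (γ : L) = algebraMap ℚ L r := by
  let E := IntermediateField.adjoin ℚ {(γ : L)}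
  have hγE : (γ : L) ∈ E := IntermediateField.mem_adjoin_simple_self ℚ _
  by_cases hE : 2 ≤ Module.finrank ℚ E
  · exfalso
    let γ' : 𝓞 E := ⟨⟨γ, hγE⟩, by
      have := RingOfIntegers.isIntegral_coe γ
      rw [mem_integralClosure_iff]
      exact (isIntegral_algebraMap_iff (A := E) (B := L) (FaithfulSMul.algebraMap_injective E L)).1 this⟩
    have hγ' : algebraMap (𝓞 E) (𝓞 L) γ' = γ := by
      apply RingOfIntegers.ext
      rfl
    have h1 : ∀ x : 𝓞 E, ∃ N : ℕ, 0 < N ∧ ∃ g : Polynomial ℤ, (N : 𝓞 E) * x = Polynomial.aeval γ' g := by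
      intro x
      apply exists_int_mul
      have hx := (x : E).2
      have hint : IsAlgebraic ℚ (γ : L) := Algebra.IsAlgebraic.isAlgebraic _
      rw [← IntermediateField.mem_toSubalgebra, IntermediateField.adjoin_simple_toSubalgebra_of_isAlgebraic hint, Algebra.adjoin_singleton_eq_range_aeval] at hx
      obtain ⟨f, hf⟩ := hx
      rw [Algebra.adjoin_singleton_eq_range_aeval]
      refine ⟨f, ?_⟩
      apply Subtype.val_injective
      rw [← hf]
      exact (Polynomial.aeval_algebraMap_apply L (γ' : E) f).symm
    choose N hN g hg using h1
    let b := RingOfIntegers.basis E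
    let P₁ := P₀ + (discr E).natAbs + ∑ i, N (b i) + 1
    have h2 : ∀ p : ℕ, p.Prime → P₁ ≤ p → ∀ q : Ideal (𝓞 E), q.IsPrime → (p : 𝓞 E) ∈ q → ∀ x, x ^ p - x ∈ q := by
      intro p hp hle q hq hpq x
      obtain ⟨Q, -, hQ, hQc⟩ := Ideal.exists_ideal_over_prime_of_isIntegral (S := 𝓞 L) q ⊥ (by
        rw [← RingHom.ker_eq_comap_bot, (RingHom.injective_iff_ker_eq_bot _).1 (FaithfulSMul.algebraMap_injective (𝓞 E) (𝓞 L))]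
        exact bot_le)
      have h3 : γ' ^ p - γ' ∈ q := by
        rw [← hQc, Ideal.mem_comap, map_sub, map_pow, hγ']
        apply h p hp (by omega) Q hQ
        rw [← hQc, Ideal.mem_comap, map_natCast] at hpq
        exact hpq
      have h4 : ∀ i, (b i) ^ p - b i ∈ q := by
        intro i
        refine kron_frob E p hp q hq hpq γ' (b i) h3 (N (b i)) (hN _) ?_ (g (b i)) (hg _)
        have : N (b i) ≤ ∑ i, N (b i) := Finset.single_le_sum (f := fun i => N (b i)) (fun _ _ => Nat.zero_le _) (Finset.mem_univ i)
        omega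
      have := Fact.mk hp
      have hchar : CharP (𝓞 E ⧸ q) p := by
        have : CharP (𝓞 E ⧸ q) p ↔ True := by
          simp only [iff_true]
          apply (CharP.charP_iff_prime_eq_zero hp).2
          rw [← map_natCast (Ideal.Quotient.mk q), Ideal.Quotient.eq_zero_iff_mem]
          exact hpq
        exact this.2 trivial
      have key : ∀ y : 𝓞 E, y ^ p - y ∈ q ↔ Ideal.Quotient.mk q y ∈ RingHom.eqLocus (frobenius (𝓞 E ⧸ q) p) (RingHom.id _) := by
        intro y
        rw [RingHom.mem_eqLocus, RingHom.id_apply, frobenius_def, ← map_pow, ← sub_eq_zero, ← map_sub, Ideal.Quotient.eq_zero_iff_mem]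
      rw [key, ← b.sum_repr x, map_sum]
      apply sum_mem
      intro i _
      rw [zsmul_eq_mul, map_mul, map_intCast]
      exact mul_mem (intCast_mem _ _) ((key _).1 (h4 i))
    have h5 : ∀ p : ℕ, ∃ P Q : Ideal (𝓞 E), p.Prime → P₁ ≤ p → Prime P ∧ Prime Q ∧ P ≠ Q ∧ Ideal.absNorm P = p ∧ Ideal.absNorm Q = p := by
      intro p
      by_cases hp : p.Prime ∧ P₁ ≤ p
      · obtain ⟨P, Q, hh⟩ := exists_two_primes E hE p hp.1 (by
          apply Nat.not_dvd_of_pos_of_lt (Int.natAbs_pos.2 (discr_ne_zero E))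
          omega) (h2 p hp.1 hp.2)
        exact ⟨P, Q, fun _ _ => hh⟩
      · exact ⟨⊥, ⊥, fun h1 h2 => absurd ⟨h1, h2⟩ hp⟩
    choose P Q hPQ using h5
    exact two_primes_contra E P₁ P Q hPQ
  · have h1 : Module.finrank ℚ E = 1 := by
      have : 0 < Module.finrank ℚ E := Module.finrank_pos
      omega
    have h2 := IntermediateField.finrank_eq_one_iff.1 h1
    rw [h2, IntermediateField.mem_bot] at hγE
    obtain ⟨r, hr⟩ := hγE
    exact ⟨r, hr.symm⟩

theorem dold_sum (a : ℕ → ℤ) (n : ℕ) (hn : 0 < n) :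
    ∑ m ∈ n.divisors, (∑ d ∈ m.divisors, ArithmeticFunction.moebius (m / d) * a d) = a n := by
  refine (ArithmeticFunction.sum_eq_iff_sum_mul_moebius_eq (g := a)).2 ?_ n hn
  intro m hm
  simp only [Int.cast_id]
  rw [Nat.sum_divisorsAntidiagonal' (f := fun i j => ArithmeticFunction.moebius i * a j)]

theorem dvd_of_dvd_mul_not (p m d : ℕ) (hp : p.Prime) (k : ℕ) (h1 : d ∣ p ^ (k + 1) * m) (h2 : ¬ d ∣ p ^ k * m) :
    p ^ (k + 1) ∣ d := by
  rcases eq_or_ne m 0 with rfl | hm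
  · simp at h2
  have hd0 : d ≠ 0 := by
    rintro rfl
    rw [zero_dvd_iff] at h1
    have := hp.pos
    simp [hm] at h1
    omega
  by_contra h
  apply h2
  obtain ⟨e, t, ht, rfl⟩ := Nat.exists_eq_pow_mul_and_not_dvd hd0 p hp.ne_one
  have he : e ≤ k := by
    by_contra hlt
    exact h ((pow_dvd_pow p (by omega)).trans (dvd_mul_right _ _))
  have h3 : t ∣ m := by
    have : t ∣ p ^ (k + 1) * m := (dvd_mul_left _ _).trans h1
    refine (Nat.Coprime.dvd_of_dvd_mul_left ?_ this)
    exact (Nat.Coprime.pow_right _ ((Nat.Prime.coprime_iff_not_dvd hp).2 ht).symm)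
  exact mul_dvd_mul (pow_dvd_pow p he) h3

theorem sub_eq_sum (a c : ℕ → ℤ) (h : ∀ n, 0 < n → ∑ d ∈ n.divisors, c d = a n) (p m k : ℕ) (hp : p.Prime) (hm : 0 < m) :
    a (p ^ (k + 1) * m) - a (p ^ k * m) = ∑ d ∈ (p ^ (k + 1) * m).divisors \ (p ^ k * m).divisors, c d := by
  have h0 := hp.pos
  rw [← h _ (by positivity), ← h _ (by positivity), Finset.sum_sdiff_eq_sub]
  apply Nat.divisors_subset_of_dvd (by positivity)
  exact mul_dvd_mul_right (pow_dvd_pow p (by omega)) m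

theorem dold_congr (a : ℕ → ℤ) (ha : DoldSeq a) (p m : ℕ) (hp : p.Prime) (hm : 0 < m) :
    (p : ℤ) ∣ a (p * m) - a m := by
  have := sub_eq_sum a _ (dold_sum a) p m 0 hp hm
  rw [zero_add, pow_one, pow_zero, one_mul] at this
  rw [this]
  apply Finset.dvd_sum
  intro d hd
  simp only [Finset.mem_sdiff, Nat.mem_divisors] at hd
  have h0 := hp.pos
  have h2 : ¬ d ∣ m := fun h => hd.2 ⟨h, by omega⟩
  have h1 := dvd_of_dvd_mul_not p m d hp 0 (by simpa using hd.1.1) (by simpa using h2)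
  rw [zero_add, pow_one] at h1
  exact (Int.natCast_dvd_natCast.2 h1).trans (ha d (Nat.pos_of_dvd_of_pos hd.1.1 (by positivity)))

theorem dold_of_congr (a : ℕ → ℤ) (h : ∀ p m k : ℕ, p.Prime → 0 < m → ((p ^ (k + 1) : ℕ) : ℤ) ∣ a (p ^ (k + 1) * m) - a (p ^ k * m)) :
    DoldSeq a := by
  intro n
  induction n using Nat.strong_induction_on with
  | _ n ih =>
  intro hn
  rw [Int.natCast_dvd]
  refine (Nat.dvd_iff_prime_pow_dvd_dvd _ _).2 ?_
  intro p k hp hk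
  rw [← Int.natCast_dvd]
  obtain ⟨e, t, ht, he⟩ := Nat.exists_eq_pow_mul_and_not_dvd (n := n) (by omega) p hp.ne_one
  have hke : k ≤ e := by
    rw [he] at hk
    have : (p ^ k) ∣ p ^ e := by
      refine (Nat.Coprime.dvd_of_dvd_mul_right ?_ hk)
      exact (Nat.Coprime.pow_left _ ((Nat.Prime.coprime_iff_not_dvd hp).2 ht))
    exact (Nat.pow_dvd_pow_iff_le_right hp.one_lt).1 this
  refine (Int.natCast_dvd_natCast.2 (pow_dvd_pow p hke)).trans ?_
  rcases Nat.eq_zero_or_pos e with rfl | hepos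
  · simp
  obtain ⟨f, rfl⟩ : ∃ f, e = f + 1 := ⟨e - 1, by omega⟩
  have h0 := hp.pos
  have ht0 : 0 < t := by
    rcases Nat.eq_zero_or_pos t with rfl | h
    · simp at ht
    · exact h
  have h1 := sub_eq_sum a _ (dold_sum a) p t f hp ht0
  have h2 := h p t f hp ht0
  rw [h1] at h2
  have hmem : n ∈ (p ^ (f + 1) * t).divisors \ (p ^ f * t).divisors := by
    simp only [Finset.mem_sdiff, Nat.mem_divisors]
    refine ⟨⟨by rw [he], by positivity⟩, ?_⟩
    rintro ⟨h3, h4⟩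
    rw [he] at h3
    have h5 := Nat.le_of_dvd (by positivity) h3
    have h6 := Nat.le_of_mul_le_mul_right h5 ht0
    have : p ^ f < p ^ (f + 1) := Nat.pow_lt_pow_right hp.one_lt (by omega)
    omega
  rw [← Finset.add_sum_erase _ _ hmem] at h2
  refine (dvd_add_left ?_).1 h2
  apply Finset.dvd_sum
  intro d hd
  simp only [Finset.mem_erase, Finset.mem_sdiff, Nat.mem_divisors] at hd
  obtain ⟨hdn, ⟨hd1, hd2⟩, hd3⟩ := hd
  have hd4 : ¬ d ∣ p ^ f * t := fun h => hd3 ⟨h, by positivity⟩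
  have hd5 := dvd_of_dvd_mul_not p t d hp f hd1 hd4
  have hdpos : 0 < d := Nat.pos_of_dvd_of_pos hd1 (by positivity)
  refine (Int.natCast_dvd_natCast.2 hd5).trans (ih d ?_ hdpos)
  rw [← he] at hd1
  exact lt_of_le_of_ne (Nat.le_of_dvd (by omega) hd1) hdn

theorem mv_frob {σ : Type*} (p : ℕ) (hp : p.Prime) (s : MvPolynomial σ ℤ) :
    ((p : ℕ) : MvPolynomial σ ℤ) ∣ MvPolynomial.expand p s - s ^ p := by
  have := Fact.mk hp
  have h : ((p : ℕ) : MvPolynomial σ ℤ) = MvPolynomial.C ((p : ℕ) : ℤ) := by simp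
  rw [h, MvPolynomial.C_dvd_iff_zmod, map_sub, map_pow, MvPolynomial.map_expand, MvPolynomial.expand_zmod, sub_self]

theorem dwork {σ : Type*} [Fintype σ] (p : ℕ) (hp : p.Prime) (k : ℕ) :
    ∃ s : ℕ → MvPolynomial σ ℤ, (∀ i, (s i).IsSymmetric) ∧
      ∀ j ≤ k, MvPolynomial.psum σ ℤ (p ^ j) = ∑ i ∈ Finset.range (j + 1), (p : MvPolynomial σ ℤ) ^ i * s i ^ (p ^ (j - i)) := by
  induction k with
  | zero =>
    refine ⟨fun _ => MvPolynomial.psum σ ℤ 1, fun i => MvPolynomial.psum_isSymmetric _ _ _, ?_⟩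
    intro j hj
    obtain rfl : j = 0 := by omega
    simp
  | succ k ih =>
    obtain ⟨s, hs, hk⟩ := ih
    have hdvd : (p : MvPolynomial σ ℤ) ^ (k + 1) ∣ MvPolynomial.psum σ ℤ (p ^ (k + 1)) - ∑ i ∈ Finset.range (k + 1), (p : MvPolynomial σ ℤ) ^ i * s i ^ (p ^ (k + 1 - i)) := by
      have h1 : MvPolynomial.psum σ ℤ (p ^ (k + 1)) = MvPolynomial.expand p (MvPolynomial.psum σ ℤ (p ^ k)) := by
        simp only [MvPolynomial.psum, map_sum, map_pow, MvPolynomial.expand_X]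
        refine Finset.sum_congr rfl fun i _ => ?_
        rw [← pow_mul, pow_succ' p k]
      rw [h1, hk k le_rfl, map_sum, ← Finset.sum_sub_distrib]
      apply Finset.dvd_sum
      intro i hi
      rw [Finset.mem_range] at hi
      rw [map_mul, map_pow, map_pow, map_natCast, ← mul_sub]
      have h2 := dvd_sub_pow_of_dvd_sub (mv_frob p hp (s i)) (k - i)
      rw [← pow_mul, ← pow_succ', show k - i + 1 = k + 1 - i by omega] at h2
      have h3 : (p : MvPolynomial σ ℤ) ^ (k + 1) = (p : MvPolynomial σ ℤ) ^ i * (p : MvPolynomial σ ℤ) ^ (k + 1 - i) := by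
        rw [← pow_add]; congr 1; omega
      rw [h3]
      exact mul_dvd_mul_left _ h2
    obtain ⟨t, ht⟩ := hdvd
    have htsymm : t.IsSymmetric := by
      intro e
      have h4 : (MvPolynomial.psum σ ℤ (p ^ (k + 1)) - ∑ i ∈ Finset.range (k + 1), (p : MvPolynomial σ ℤ) ^ i * s i ^ (p ^ (k + 1 - i))).IsSymmetric := by
        rw [← MvPolynomial.mem_symmetricSubalgebra]
        refine sub_mem ?_ (sum_mem fun i _ => mul_mem (pow_mem (natCast_mem _ _) _) (pow_mem ?_ _))
        · exact MvPolynomial.psum_isSymmetric _ _ _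
        · exact hs i
      have h5 := h4 e
      rw [ht, map_mul, map_pow, map_natCast] at h5
      refine mul_left_cancel₀ (pow_ne_zero _ ?_) h5
      exact_mod_cast hp.ne_zero
    refine ⟨Function.update s (k + 1) t, ?_, ?_⟩
    · intro i
      by_cases hi : i = k + 1
      · subst hi; simpa using htsymm
      · rw [Function.update_of_ne hi]; exact hs i
    · intro j hj
      have hcong : ∀ n, n ≤ k + 1 → ∑ i ∈ Finset.range n, (p : MvPolynomial σ ℤ) ^ i * (Function.update s (k + 1) t i) ^ (p ^ (j - i)) = ∑ i ∈ Finset.range n, (p : MvPolynomial σ ℤ) ^ i * s i ^ (p ^ (j - i)) := by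
        intro n hn
        refine Finset.sum_congr rfl fun i hi => ?_
        rw [Finset.mem_range] at hi
        rw [Function.update_of_ne (by omega)]
      rcases Nat.lt_or_ge k j with hlt | hge
      · obtain rfl : j = k + 1 := by omega
        rw [Finset.sum_range_succ, hcong _ le_rfl, Function.update_self, Nat.sub_self, pow_zero, pow_one, ← ht]
        ring
      · rw [hcong _ (by omega)]
        exact hk j hge

theorem symm_eval_int (K : Type) [Field K] [NumberField K] (θ : 𝓞 K)
    (s : MvPolynomial (K →ₐ[ℚ] AlgebraicClosure ℚ) ℤ) (hs : s.IsSymmetric) :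
    ∃ u : ℤ, (u : AlgebraicClosure ℚ) = MvPolynomial.aeval (fun φ : K →ₐ[ℚ] AlgebraicClosure ℚ => φ (θ : K)) s := by
  set x : (K →ₐ[ℚ] AlgebraicClosure ℚ) → AlgebraicClosure ℚ := fun φ => φ (θ : K) with hx
  set y := MvPolynomial.aeval x s with hy
  have hint : IsIntegral ℤ y := by
    rw [hy, ← mem_integralClosure_iff]
    have : ∀ φ, x φ ∈ integralClosure ℤ (AlgebraicClosure ℚ) := fun φ => by
      rw [mem_integralClosure_iff]
      exact (RingOfIntegers.isIntegral_coe θ).map (φ.restrictScalars ℤ)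
    have h2 : MvPolynomial.aeval x s = ((MvPolynomial.aeval (fun φ => (⟨x φ, this φ⟩ : integralClosure ℤ (AlgebraicClosure ℚ))) s : integralClosure ℤ (AlgebraicClosure ℚ)) : AlgebraicClosure ℚ) := by
      have := MvPolynomial.aeval_algebraMap_apply (AlgebraicClosure ℚ) (fun φ => (⟨x φ, this φ⟩ : integralClosure ℤ (AlgebraicClosure ℚ))) s
      exact this
    rw [h2]
    exact Subtype.property _
  have hfix : ∀ τ : AlgebraicClosure ℚ ≃ₐ[ℚ] AlgebraicClosure ℚ, τ y = y := by
    intro τ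
    let e : (K →ₐ[ℚ] AlgebraicClosure ℚ) ≃ (K →ₐ[ℚ] AlgebraicClosure ℚ) :=
      { toFun := fun φ => (τ : AlgebraicClosure ℚ →ₐ[ℚ] AlgebraicClosure ℚ).comp φ
        invFun := fun φ => (τ.symm : AlgebraicClosure ℚ →ₐ[ℚ] AlgebraicClosure ℚ).comp φ
        left_inv := fun φ => by ext; simp
        right_inv := fun φ => by ext; simp }
    have h1 : τ y = MvPolynomial.aeval (x ∘ e) s := by
      have := MvPolynomial.map_aeval x ((τ : AlgebraicClosure ℚ →+* AlgebraicClosure ℚ)) s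
      rw [hy, MvPolynomial.aeval_def, MvPolynomial.aeval_def]
      have h3 := MvPolynomial.eval₂_comp_left (τ : AlgebraicClosure ℚ →+* AlgebraicClosure ℚ) (algebraMap ℤ _) x s
      refine h3.trans ?_
      congr 1
      exact RingHom.ext_int _ _
    rw [h1, hy]
    conv_rhs => rw [← hs e]
    rw [MvPolynomial.aeval_rename]
  have hbot : y ∈ (⊥ : IntermediateField ℚ (AlgebraicClosure ℚ)) := by
    have : IsAlgClosure ℚ (AlgebraicClosure ℚ) := by
      have h := @AlgebraicClosure.instIsAlgClosure ℚ _
      convert h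
      · rfl
      · exact Subsingleton.elim _ _
    have : IsGalois ℚ (AlgebraicClosure ℚ) := IsAlgClosure.isGalois ℚ _
    rw [InfiniteGalois.mem_bot_iff_fixed]
    exact hfix
  rw [IntermediateField.mem_bot] at hbot
  obtain ⟨r, hr⟩ := hbot
  rw [← hr] at hint
  have hr' : IsIntegral ℤ r := (isIntegral_algebraMap_iff (FaithfulSMul.algebraMap_injective ℚ (AlgebraicClosure ℚ))).1 hint
  obtain ⟨u, hu⟩ := IsIntegrallyClosed.isIntegral_iff.1 hr'
  refine ⟨u, ?_⟩
  rw [← hr, ← hu]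
  simp

theorem trace_congr (K : Type) [Field K] [NumberField K] (θ : 𝓞 K) (p : ℕ) (hp : p.Prime) (k : ℕ) :
    ((p ^ (k + 1) : ℕ) : ℤ) ∣ Algebra.trace ℤ (𝓞 K) (θ ^ (p ^ (k + 1))) - Algebra.trace ℤ (𝓞 K) (θ ^ (p ^ k)) := by
  have := Fact.mk hp
  obtain ⟨s, hs, hk⟩ := dwork (σ := K →ₐ[ℚ] AlgebraicClosure ℚ) p hp (k + 1)
  choose u hu using fun i => symm_eval_int K θ (s i) (hs i)
  have hT : ∀ j ≤ k + 1, Algebra.trace ℤ (𝓞 K) (θ ^ (p ^ j)) = ∑ i ∈ Finset.range (j + 1), (p : ℤ) ^ i * u i ^ (p ^ (j - i)) := by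
    intro j hj
    have h1 := congrArg (MvPolynomial.aeval (fun φ : K →ₐ[ℚ] AlgebraicClosure ℚ => φ (θ : K))) (hk j hj)
    have h2 : algebraMap ℚ (AlgebraicClosure ℚ) (Algebra.trace ℚ K ((θ : K) ^ (p ^ j))) = ((Algebra.trace ℤ (𝓞 K) (θ ^ (p ^ j)) : ℤ) : AlgebraicClosure ℚ) := by
      have := Algebra.trace_localization ℤ (nonZeroDivisors ℤ) (Rₘ := ℚ) (Sₘ := K) (θ ^ (p ^ j))
      rw [map_pow] at this
      rw [this]
      simp
    rw [trace_eq_sum_embeddings (AlgebraicClosure ℚ)] at h2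
    simp only [MvPolynomial.psum, map_sum, map_pow, MvPolynomial.aeval_X, map_mul, map_natCast, ← hu] at h1
    simp only [map_pow] at h2
    rw [h1] at h2
    exact_mod_cast h2.symm
  rw [hT _ le_rfl, hT _ (by omega), Finset.sum_range_succ, add_sub_right_comm, ← Finset.sum_sub_distrib]
  apply dvd_add
  · apply Finset.dvd_sum
    intro i hi
    rw [Finset.mem_range] at hi
    rw [← mul_sub]
    have h3 : (p : ℤ) ∣ u i ^ p - u i := by
      rw [← ZMod.intCast_zmod_eq_zero_iff_dvd]
      simp
    have h2 := dvd_sub_pow_of_dvd_sub h3 (k - i)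
    rw [← pow_mul, ← pow_succ', show k - i + 1 = k + 1 - i by omega] at h2
    have h3 : ((p ^ (k + 1) : ℕ) : ℤ) = (p : ℤ) ^ i * (p : ℤ) ^ (k + 1 - i) := by
      rw [← pow_add]; push_cast; congr 1; omega
    rw [h3]
    exact mul_dvd_mul_left _ h2
  · push_cast
    exact dvd_mul_right _ _

theorem trace_imp_dold (a : ℕ → ℤ) (w : TraceSequenceWitness a) :
    ∃ (q : ℚ) (d : ℕ → ℤ), q ≠ 0 ∧ DoldSeq d ∧ ∀ n : ℕ, 1 ≤ n → (a n : ℚ) = q * (d n : ℚ) := by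
  obtain ⟨K, r, b, θ, ht⟩ := w
  obtain ⟨⟨N, hN⟩, hb⟩ := IsLocalization.exist_integer_multiples (nonZeroDivisors ℤ) Finset.univ b
  choose c hc using fun i => hb i (Finset.mem_univ i)
  have hN0 : (N : ℚ) ≠ 0 := by exact_mod_cast nonZeroDivisors.ne_zero hN
  refine ⟨(N : ℚ)⁻¹, fun n => ∑ i, c i * Algebra.trace ℤ (𝓞 K) (θ i ^ n), inv_ne_zero hN0, ?_, ?_⟩
  · apply dold_of_congr
    intro p m k hp hm
    rw [← Finset.sum_sub_distrib]
    apply Finset.dvd_sum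
    intro i _
    rw [← mul_sub]
    apply Dvd.dvd.mul_left
    have := trace_congr K (θ i ^ m) p hp k
    rwa [← pow_mul, ← pow_mul, mul_comm m, mul_comm m] at this
  · intro n hn
    rw [ht n hn, eq_inv_mul_iff_mul_eq₀ hN0, Finset.mul_sum]
    push_cast
    apply Finset.sum_congr rfl
    intro i _
    have h1 := Algebra.trace_localization ℤ (nonZeroDivisors ℤ) (Rₘ := ℚ) (Sₘ := K) (θ i ^ n)
    rw [map_pow] at h1
    have h2 := hc i
    simp only [eq_intCast, zsmul_eq_mul] at h1 h2
    rw [h1, h2, mul_assoc]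

open Polynomial in
noncomputable def ell (R : Type) [CommRing R] (d : ℕ → ℤ) : R[X] →ₗ[R] R :=
  Polynomial.lsum (fun j => (d j : R) • LinearMap.id)

open Polynomial in
theorem ell_monomial (R : Type) [CommRing R] (d : ℕ → ℤ) (j : ℕ) (c : R) :
    ell R d (monomial j c) = c * (d j : R) := by
  simp [ell, Polynomial.lsum_apply, mul_comm]

open Polynomial in
theorem ell_X_pow (R : Type) [CommRing R] (d : ℕ → ℤ) (j : ℕ) :
    ell R d (X ^ j) = (d j : R) := by
  rw [← monomial_one_right_eq_X_pow, ell_monomial, one_mul]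

open Polynomial in
theorem ell_C_mul (R : Type) [CommRing R] (d : ℕ → ℤ) (c : R) (g : R[X]) :
    ell R d (C c * g) = c * ell R d g := by
  rw [← smul_eq_C_mul, map_smul, smul_eq_mul]

open Polynomial in
theorem ell_map (R S : Type) [CommRing R] [CommRing S] (φ : R →+* S) (d : ℕ → ℤ) (g : R[X]) :
    ell S d (g.map φ) = φ (ell R d g) := by
  induction g using Polynomial.induction_on' with
  | add f g hf hg => simp [hf, hg]
  | monomial n a => simp [ell_monomial]

open Polynomial in
theorem ell_all (R : Type) [CommRing R] (d : ℕ → ℤ) (h : R[X])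
    (hh : ∀ i : ℕ, ell R d (X ^ (i + 1) * h) = 0) (g : R[X]) : ell R d (X * g * h) = 0 := by
  induction g using Polynomial.induction_on' with
  | add f g hf hg => rw [mul_add, add_mul, map_add, hf, hg, add_zero]
  | monomial n a =>
    rw [← C_mul_X_pow_eq_monomial, show X * (C a * X ^ n) * h = C a * (X ^ (n + 1) * h) by ring,
      ell_C_mul, hh, mul_zero]

open Polynomial in
theorem ell_frob (d : ℕ → ℤ) (hd : DoldSeq d) (p : ℕ) (hp : p.Prime) (v : ℤ[X]) :
    (p : ℤ) ∣ ell ℤ d ((X * v) ^ p) - ell ℤ d (X * v) := by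
  have := Fact.mk hp
  have h1 : (C (p : ℤ)) ∣ (X * v) ^ p - expand ℤ p (X * v) := by
    rw [C_dvd_iff_dvd_coeff]
    intro i
    rw [← ZMod.intCast_zmod_eq_zero_iff_dvd]
    have h2 := ZMod.expand_card ((X * v).map (Int.castRingHom (ZMod p)))
    have h3 : ((X * v) ^ p - expand ℤ p (X * v)).map (Int.castRingHom (ZMod p)) = 0 := by
      rw [Polynomial.map_sub, Polynomial.map_pow, Polynomial.map_expand, h2, sub_self]
    have h6 := congrArg (fun q => q.coeff i) h3
    simp only [coeff_map, coeff_zero, eq_intCast] at h6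
    exact h6
  obtain ⟨u, hu⟩ := h1
  have h4 : (p : ℤ) ∣ ell ℤ d (expand ℤ p (X * v)) - ell ℤ d (X * v) := by
    clear hu
    induction v using Polynomial.induction_on' with
    | add f g hf hg =>
      rw [mul_add, map_add, map_add, map_add, add_sub_add_comm]
      exact dvd_add hf hg
    | monomial n a =>
      rw [X_mul_monomial, expand_monomial, ell_monomial, ell_monomial, ← mul_sub, mul_comm (n+1) p]
      exact Dvd.dvd.mul_left (by simpa using dold_congr d hd p (n + 1) hp (by omega)) _
  have h5 : ell ℤ d ((X * v) ^ p) - ell ℤ d (expand ℤ p (X * v)) = p * ell ℤ d u := by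
    rw [← map_sub, hu, ell_C_mul]
  have : ell ℤ d ((X * v) ^ p) - ell ℤ d (X * v) = p * ell ℤ d u + (ell ℤ d (expand ℤ p (X * v)) - ell ℤ d (X * v)) := by
    rw [← h5]; ring
  rw [this]
  exact dvd_add (dvd_mul_right _ _) h4

open Polynomial in
noncomputable def annJ (d : ℕ → ℤ) : Ideal ℚ[X] where
  carrier := {h | ∀ g : ℚ[X], ell ℚ d (X * g * h) = 0}
  add_mem' := by
    intro a b ha hb g
    rw [mul_add, map_add, ha g, hb g, add_zero]
  zero_mem' := by intro g; simp
  smul_mem' := by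
    intro c x hx g
    have := hx (g * c)
    rw [smul_eq_mul, show X * g * (c * x) = X * (g * c) * x by ring]
    exact this

open Polynomial in
theorem annJ_radical (d : ℕ → ℤ) (hd : DoldSeq d) (h : ℚ[X]) (e : ℕ) (he : h ^ e ∈ annJ d) :
    h ∈ annJ d := by
  obtain ⟨N, hN, g, hg⟩ := int_normalize h
  apply ell_all
  intro i
  have hN0 : (N : ℚ) ≠ 0 := by exact_mod_cast hN.ne'
  suffices hz : ell ℤ d (X ^ (i + 1) * g) = 0 by
    have h1 := ell_map ℤ ℚ (Int.castRingHom ℚ) d (X ^ (i + 1) * g)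
    rw [hz, Polynomial.map_mul, hg, Polynomial.map_pow, map_X,
      show X ^ (i + 1) * (C (N : ℚ) * h) = C (N : ℚ) * (X ^ (i + 1) * h) by ring, ell_C_mul, map_zero] at h1
    exact (mul_eq_zero.1 h1).resolve_left hN0
  have hdvd : ∀ p : ℕ, p.Prime → e ≤ p → (p : ℤ) ∣ ell ℤ d (X ^ (i + 1) * g) := by
    intro p hp hep
    have h1 := ell_frob d hd p hp (X ^ i * g)
    have h2 : ell ℤ d ((X * (X ^ i * g)) ^ p) = 0 := by
      have h3 := ell_map ℤ ℚ (Int.castRingHom ℚ) d ((X * (X ^ i * g)) ^ p)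
      have h4 : ell ℚ d (((X * (X ^ i * g)) ^ p).map (Int.castRingHom ℚ)) = 0 := by
        obtain ⟨k, rfl⟩ := Nat.exists_eq_add_of_le hep
        obtain ⟨m, hm⟩ : ∃ m, e + k = m + 1 := ⟨e + k - 1, by have := hp.pos; omega⟩
        have h5 := he (X ^ m * (X ^ i) ^ (e + k) * C (N : ℚ) ^ (e + k) * h ^ k)
        rw [← h5]
        congr 1
        simp only [Polynomial.map_pow, Polynomial.map_mul, map_X, hg]
        rw [mul_pow, mul_pow, mul_pow, pow_add h]
        nth_rw 1 [hm]
        ring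
      rw [h4] at h3
      simpa using h3.symm
    rw [h2, zero_sub, dvd_neg] at h1
    rwa [show X ^ (i + 1) * g = X * (X ^ i * g) by ring]
  by_contra hne
  obtain ⟨p, hp1, hp2⟩ := Nat.exists_infinite_primes (e + (ell ℤ d (X ^ (i + 1) * g)).natAbs + 1)
  have h1 := Int.le_of_dvd (abs_pos.2 hne) ((dvd_abs _ _).2 (hdvd p hp2 (by omega)))
  rw [Int.abs_eq_natAbs] at h1
  omega

open Polynomial in
theorem fatou (d : ℕ → ℤ) (p : ℕ) (α : ℕ → ℚ)
    (hr : ∀ n : ℕ, 1 ≤ n → (d (n + p) : ℚ) = ∑ i ∈ Finset.range p, α i * (d (n + i) : ℚ)) :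
    ∃ Q : ℤ[X], Q.Monic ∧ Q.map (Int.castRingHom ℚ) ∈ annJ d := by
  let W : Submodule ℤ (ℕ → ℤ) :=
    { carrier := {f | ∀ n : ℕ, (f (n + p) : ℚ) = ∑ i ∈ Finset.range p, α i * (f (n + i) : ℚ)}
      add_mem' := by
        intro f g hf hg n
        simp only [Pi.add_apply, Int.cast_add, hf n, hg n, mul_add, Finset.sum_add_distrib]
      zero_mem' := by intro n; simp
      smul_mem' := by
        intro c f hf n
        simp only [Pi.smul_apply, smul_eq_mul, Int.cast_mul, hf n, Finset.mul_sum]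
        exact Finset.sum_congr rfl fun i _ => by ring }
  let res : W →ₗ[ℤ] (Fin p → ℤ) :=
    { toFun := fun f i => f.1 i
      map_add' := fun _ _ => rfl
      map_smul' := fun _ _ => rfl }
  have hinj : Function.Injective res := by
    rw [injective_iff_map_eq_zero]
    intro f hf
    ext n
    change f.1 n = 0
    induction n using Nat.strong_induction_on with
    | _ n ih =>
      rcases lt_or_ge n p with hn | hn
      · exact congrFun hf ⟨n, hn⟩
      · obtain ⟨k, rfl⟩ := Nat.exists_eq_add_of_le hn
        have h1 : (f.1 (k + p) : ℚ) = _ := f.2 k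
        rw [Finset.sum_eq_zero] at h1
        · rw [add_comm p k]; exact_mod_cast h1
        · intro i hi
          rw [ih (k + i) (by have := Finset.mem_range.1 hi; omega)]
          simp
  have : Module.Finite ℤ W := Module.Finite.of_injective res hinj
  let S : W →ₗ[ℤ] W :=
    { toFun := fun f => ⟨fun n => f.1 (n + 1), fun n => by
        have := f.2 (n + 1)
        simpa only [add_right_comm] using this⟩
      map_add' := fun _ _ => rfl
      map_smul' := fun _ _ => rfl }
  obtain ⟨Q, hQ, hQ0⟩ := Algebra.IsIntegral.isIntegral (R := ℤ) (A := Module.End ℤ W) S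
  let f : W := ⟨fun n => d (n + 1), fun n => by
    have := hr (n + 1) (by omega)
    simpa only [add_right_comm] using this⟩
  have hS : ∀ j : ℕ, ∀ n, ((S ^ j) f).1 n = d (n + 1 + j) := by
    intro j
    induction j with
    | zero => intro n; rfl
    | succ j ih =>
      intro n
      rw [pow_succ', Module.End.mul_apply]
      change ((S ^ j) f).1 (n + 1) = _
      rw [ih]
      congr 1; omega
  have hA : ∀ (g : ℤ[X]) (n : ℕ), ((aeval S g) f).1 n = ell ℤ d (X ^ (n + 1) * g) := by
    intro g n
    induction g using Polynomial.induction_on' with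
    | add u v hu hv => rw [map_add, mul_add, map_add, ← hu, ← hv]; rfl
    | monomial m a =>
      rw [aeval_monomial, X_pow_mul_monomial, ell_monomial, Module.End.mul_apply, Module.algebraMap_end_apply]
      change a • (((S ^ m) f).1 n) = _
      rw [hS, smul_eq_mul, Int.cast_id, add_comm m]
  refine ⟨Q, hQ, ell_all _ _ _ fun i => ?_⟩
  have h1 := hA Q i
  rw [← aeval_def] at hQ0
  rw [hQ0] at h1
  have h2 := ell_map ℤ ℚ (Int.castRingHom ℚ) d (X ^ (i + 1) * Q)
  rw [← h1, Polynomial.map_mul, Polynomial.map_pow, map_X] at h2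
  rw [h2]
  exact map_zero _

open Polynomial in
theorem rec_mem (d : ℕ → ℤ) (p : ℕ) (α : ℕ → ℚ) (hp : 1 ≤ p) (h0 : α 0 ≠ 0)
    (hr : ∀ n : ℕ, 1 ≤ n → (d (n + p) : ℚ) = ∑ i ∈ Finset.range p, α i * (d (n + i) : ℚ)) :
    ∃ F : ℚ[X], F.eval 0 ≠ 0 ∧ F ∈ annJ d := by
  refine ⟨X ^ p - ∑ i ∈ Finset.range p, C (α i) * X ^ i, ?_, ell_all _ _ _ fun i => ?_⟩
  · simp only [eval_sub, eval_pow, eval_X, eval_finsetSum, eval_mul, eval_C]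
    rw [zero_pow (by omega), Finset.sum_eq_single 0]
    · simpa using h0
    · intro b _ hb; simp [hb]
    · intro h; simp at h; omega
  · rw [mul_sub, map_sub, ← pow_add, ell_X_pow, Finset.mul_sum, map_sum, hr _ (by omega), sub_eq_zero]
    apply Finset.sum_congr rfl
    intro j _
    rw [show X ^ (i + 1) * (C (α j) * X ^ j) = C (α j) * X ^ (i + 1 + j) by ring, ell_C_mul, ell_X_pow]

open Polynomial in
theorem vander_zero {k ι : Type} [CommRing k] [IsDomain k] [DecidableEq ι] (s : Finset ι) (x e : ι → k)
    (hx : Set.InjOn x s) (h0 : ∀ i ∈ s, x i ≠ 0)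
    (h : ∀ m : ℕ, 1 ≤ m → ∑ i ∈ s, e i * x i ^ m = 0) : ∀ i ∈ s, e i = 0 := by
  have hg : ∀ g : k[X], ∑ i ∈ s, e i * (x i * g.eval (x i)) = 0 := by
    intro g
    induction g using Polynomial.induction_on' with
    | add f g hf hg => simp only [eval_add, mul_add, Finset.sum_add_distrib, hf, hg, add_zero]
    | monomial n a =>
      simp only [eval_monomial]
      have := congrArg (a * ·) (h (n + 1) (by omega))
      simp only [Finset.mul_sum, mul_zero] at this
      rw [← this]
      exact Finset.sum_congr rfl fun i _ => by ring
  intro i hi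
  have h1 := hg (∏ j ∈ s.erase i, (X - C (x j)))
  rw [Finset.sum_eq_single_of_mem i hi] at h1
  · rcases mul_eq_zero.1 h1 with h2 | h2
    · exact h2
    · exfalso
      rcases mul_eq_zero.1 h2 with h3 | h3
      · exact h0 i hi h3
      · rw [eval_prod, Finset.prod_eq_zero_iff] at h3
        obtain ⟨j, hj, hj2⟩ := h3
        rw [eval_sub, eval_X, eval_C, sub_eq_zero] at hj2
        rw [Finset.mem_erase] at hj
        exact hj.1 (hx hj.2 hi hj2.symm)
  · intro j hj hji
    rw [eval_prod, Finset.prod_eq_zero (Finset.mem_erase.2 ⟨hji, hj⟩), mul_zero, mul_zero]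
    simp

theorem gamma_congr (L : Type) [Field L] [NumberField L] (d : ℕ → ℤ) (hd : DoldSeq d)
    (s : Finset (𝓞 L)) (h0 : ∀ x ∈ s, x ≠ 0) (γ : 𝓞 L → 𝓞 L) (D : ℤ)
    (h : ∀ n : ℕ, 1 ≤ n → ((D * d n : ℤ) : 𝓞 L) = ∑ x ∈ s, γ x * x ^ n) :
    ∃ P₀ : ℕ, ∀ p : ℕ, p.Prime → P₀ ≤ p → ∀ q : Ideal (𝓞 L), q.IsPrime → (p : 𝓞 L) ∈ q →
      ∀ x ∈ s, γ x ^ p - γ x ∈ q := by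
  classical
  set Δ : 𝓞 L := (∏ x ∈ s, x) * ∏ z ∈ s.offDiag, (z.1 - z.2) with hΔ
  have hΔ0 : Δ ≠ 0 := by
    apply mul_ne_zero
    · exact Finset.prod_ne_zero_iff.2 h0
    · rw [Finset.prod_ne_zero_iff]
      intro z hz
      exact sub_ne_zero.2 (Finset.mem_offDiag.1 hz).2.2
  set M := Ideal.absNorm (Ideal.span {Δ}) with hM
  have hM0 : M ≠ 0 := by
    rw [hM, Ne, Ideal.absNorm_eq_zero_iff, Ideal.span_singleton_eq_bot]
    exact hΔ0
  refine ⟨M + 1, ?_⟩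
  intro p hp hpM q hq hpq
  have hΔq : Δ ∉ q := by
    intro hmem
    have h1 : (M : 𝓞 L) ∈ q := (Ideal.span_singleton_le_iff_mem q).2 hmem (Ideal.absNorm_mem _)
    have hc : IsCoprime (M : ℤ) (p : ℤ) := by
      rw [Nat.isCoprime_iff_coprime, Nat.coprime_comm]
      exact (Nat.Prime.coprime_iff_not_dvd hp).2 (fun hdv => by
        have := Nat.le_of_dvd (Nat.pos_of_ne_zero hM0) hdv
        omega)
    obtain ⟨u, v, huv⟩ := hc
    apply hq.ne_top
    rw [Ideal.eq_top_iff_one]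
    have h2 := congrArg (Int.cast : ℤ → 𝓞 L) huv
    push_cast at h2
    rw [← h2]
    exact q.add_mem (q.mul_mem_left _ h1) (q.mul_mem_left _ hpq)
  have := Fact.mk hp
  have hch : CharP (𝓞 L ⧸ q) p := by
    have h1 : ((p : ℕ) : 𝓞 L ⧸ q) = 0 := by
      rw [← map_natCast (Ideal.Quotient.mk q)]
      exact Ideal.Quotient.eq_zero_iff_mem.2 hpq
    obtain ⟨r, hr⟩ := CharP.exists (𝓞 L ⧸ q)
    have h2 := (CharP.cast_eq_zero_iff (𝓞 L ⧸ q) r p).1 h1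
    rcases (Nat.dvd_prime hp).1 h2 with h3 | h3
    · subst h3
      exact absurd rfl (CharP.char_ne_one (𝓞 L ⧸ q) 1)
    · rwa [← h3]
  set π := Ideal.Quotient.mk q with hπ
  have hz : ∀ x ∈ s, π x ≠ 0 := by
    intro x hx h1
    apply hΔq
    exact q.mul_mem_right _ (Ideal.mem_of_dvd q (Finset.dvd_prod_of_mem (fun z : 𝓞 L => z) hx) (Ideal.Quotient.eq_zero_iff_mem.1 h1))
  have hinj : Set.InjOn (fun x => π x ^ p) s := by
    intro x hx y hy hxy
    by_contra hne
    have h1 : π x = π y := frobenius_inj (𝓞 L ⧸ q) p hxy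
    rw [hπ, Ideal.Quotient.eq] at h1
    apply hΔq
    exact q.mul_mem_left _ (Ideal.mem_of_dvd q (Finset.dvd_prod_of_mem (fun z : 𝓞 L × 𝓞 L => z.1 - z.2) (Finset.mem_offDiag.2 ⟨hx, hy, hne⟩ : (x, y) ∈ s.offDiag)) h1)
  have hv := vander_zero s (fun x => π x ^ p) (fun x => π (γ x ^ p - γ x)) hinj
    (fun x hx => pow_ne_zero _ (hz x hx)) ?_
  · intro x hx
    exact Ideal.Quotient.eq_zero_iff_mem.1 (hv x hx)
  · intro m hm
    have e1 := congrArg π (h m hm)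
    have e2 := congrArg π (h (p * m) (by have := hp.pos; nlinarith))
    have e3 : ((D * d (p * m) : ℤ) : 𝓞 L ⧸ q) = ((D * d m : ℤ) : 𝓞 L ⧸ q) := by
      rw [← sub_eq_zero, ← Int.cast_sub, ← mul_sub, CharP.intCast_eq_zero_iff (𝓞 L ⧸ q) p]
      exact Dvd.dvd.mul_left (dold_congr d hd p m hp hm) _
    have e4 := congrArg (frobenius (𝓞 L ⧸ q) p) e1
    rw [map_intCast, map_intCast, ← e3, ← map_intCast π, e2] at e4
    simp only [map_sum, map_mul, map_pow, frobenius_def] at e4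
    simp only [map_sub, map_pow, sub_mul, Finset.sum_sub_distrib]
    rw [sub_eq_zero]
    refine Eq.trans ?_ (e4.symm.trans ?_)
    · rfl
    · exact Finset.sum_congr rfl fun x _ => by rw [← pow_mul]

open Polynomial in
theorem decomp (d : ℕ → ℤ) (L : Type) [Field L] [NumberField L] [DecidableEq L] (G : ℚ[X]) (hG : G ∈ annJ d)
    (hG0 : G ≠ 0) (hsq : Squarefree G) (hspl : (G.map (algebraMap ℚ L)).Splits) :
    ∃ c : L → L, ∀ n : ℕ, (d (n + 1) : L) = ∑ x ∈ (G.map (algebraMap ℚ L)).roots.toFinset, c x * x ^ n := by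
  set H := G.map (algebraMap ℚ L) with hH
  have hH0 : H ≠ 0 := (Polynomial.map_ne_zero_iff (algebraMap ℚ L).injective).2 hG0
  have hnd : H.roots.Nodup := nodup_roots ((PerfectField.separable_iff_squarefree.2 hsq).map)
  have hell : ∀ u : L[X], ell L d (X * u * H) = 0 := by
    apply ell_all
    intro i
    have h1 := hG (X ^ i)
    have h2 := ell_map ℚ L (algebraMap ℚ L) d (X * X ^ i * G)
    rw [h1, map_zero] at h2
    simpa [pow_succ'] using h2
  refine ⟨fun x => ell L d (X * Lagrange.basis H.roots.toFinset id x), fun n => ?_⟩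
  set P : L[X] := X ^ n - ∑ x ∈ H.roots.toFinset, C (x ^ n) * Lagrange.basis H.roots.toFinset id x with hP
  have hdvd : H ∣ P := by
    rcases eq_or_ne P 0 with hP0 | hP0
    · rw [hP0]; exact dvd_zero _
    have h1 : (H.roots.map fun a => X - C a).prod ∣ P := by
      rw [Multiset.prod_X_sub_C_dvd_iff_le_roots hP0, Multiset.le_iff_subset hnd]
      intro y hy
      rw [mem_roots hP0, IsRoot.def, hP]
      have hy' : y ∈ H.roots.toFinset := Multiset.mem_toFinset.2 hy
      simp only [eval_sub, eval_pow, eval_X, eval_finsetSum, eval_mul, eval_C]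
      rw [Finset.sum_eq_single_of_mem y hy']
      · have := Lagrange.eval_basis_self (v := id) (Set.injOn_id (H.roots.toFinset : Set L)) hy'
        rw [id] at this
        rw [this]; ring
      · intro b _ hb
        have := Lagrange.eval_basis_of_ne (v := id) hb hy'
        rw [id] at this
        rw [this, mul_zero]
    rw [hspl.eq_prod_roots]
    exact (IsUnit.mul_left_dvd (isUnit_C.2 (isUnit_iff_ne_zero.2 (leadingCoeff_ne_zero.2 hH0)))).2 h1
  obtain ⟨u, hu⟩ := hdvd
  have h3 := hell u
  rw [mul_assoc, mul_comm u, ← hu, hP, mul_sub, map_sub, ← pow_succ', ell_X_pow, sub_eq_zero, Finset.mul_sum, map_sum] at h3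
  rw [h3]
  refine Finset.sum_congr rfl fun x _ => ?_
  rw [mul_left_comm, ell_C_mul, mul_comm]

open Polynomial in
theorem exists_split_field_aux (k : Type) [Field k] (G : k[X]) :
    ∃ (L : Type) (_ : Field L) (_ : Algebra k L), FiniteDimensional k L ∧ (G.map (algebraMap k L)).Splits :=
  ⟨G.SplittingField, inferInstance, inferInstance, IsSplittingField.finiteDimensional G.SplittingField G,
    SplittingField.splits G⟩

open Polynomial in
theorem exists_split_field (G : ℚ[X]) :
    ∃ (L : Type) (_ : Field L) (_ : NumberField L), (G.map (algebraMap ℚ L)).Splits := by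
  obtain ⟨L, i1, i2, hf, hs⟩ := exists_split_field_aux ℚ G
  have hc : CharZero L := charZero_of_injective_algebraMap (algebraMap ℚ L).injective
  have hN : NumberField L :=
    { to_charZero := hc
      to_finiteDimensional := by
        convert hf
        · rfl
        · rfl
        · exact Subsingleton.elim _ _ }
  refine ⟨L, i1, hN, ?_⟩
  convert hs
  · rfl
  · rfl
  · exact Subsingleton.elim _ _

open Polynomial in
theorem exists_sum (d : ℕ → ℤ) (hd : DoldSeq d) (p : ℕ) (α : ℕ → ℚ) (hp : 1 ≤ p) (h0 : α 0 ≠ 0)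
    (hr : ∀ n : ℕ, 1 ≤ n → (d (n + p) : ℚ) = ∑ i ∈ Finset.range p, α i * (d (n + i) : ℚ)) :
    ∃ (L : Type) (_ : Field L) (_ : NumberField L) (s : Finset (𝓞 L)) (c : 𝓞 L → L),
      (∀ x ∈ s, x ≠ 0) ∧ ∀ n : ℕ, 1 ≤ n → (d n : L) = ∑ x ∈ s, c x * (x : L) ^ n := by
  classical
  obtain ⟨F, hF0, hF⟩ := rec_mem d p α hp h0 hr
  obtain ⟨Q, hQm, hQ⟩ := fatou d p α hr
  set G := Submodule.IsPrincipal.generator (annJ d) with hGdef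
  have hmem : ∀ x, x ∈ annJ d ↔ G ∣ x := fun x => Submodule.IsPrincipal.mem_iff_generator_dvd (annJ d)
  have hGm : G ∈ annJ d := (hmem G).2 dvd_rfl
  have hGF := (hmem F).1 hF
  have hGQ := (hmem _).1 hQ
  have hG0 : G ≠ 0 := by
    intro h
    rw [h, zero_dvd_iff] at hGF
    rw [hGF] at hF0
    simp at hF0
  have hsq : Squarefree G := by
    apply IsRadical.squarefree hG0
    intro n h hdv
    exact (hmem h).1 (annJ_radical d hd h n ((hmem _).2 hdv))
  obtain ⟨L, hL1, hL2, hspl⟩ := exists_split_field G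
  obtain ⟨c, hc⟩ := decomp d L G hGm hG0 hsq hspl
  set R := (G.map (algebraMap ℚ L)).roots.toFinset with hR
  have hroot : ∀ x ∈ R, aeval x G = 0 := by
    intro x hx
    rw [hR, Multiset.mem_toFinset] at hx
    have := (mem_roots'.1 hx).2
    rwa [IsRoot.def, eval_map_algebraMap] at this
  have hne : ∀ x ∈ R, x ≠ 0 := by
    rintro x hx rfl
    have h1 := aeval_eq_zero_of_dvd_aeval_eq_zero hGF (hroot 0 hx)
    apply hF0
    have h2 : aeval (algebraMap ℚ L 0) F = 0 := by rwa [map_zero]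
    rw [aeval_algebraMap_apply, map_eq_zero] at h2
    simpa using h2
  have hint : ∀ x ∈ R, IsIntegral ℤ x := by
    intro x hx
    have h1 := aeval_eq_zero_of_dvd_aeval_eq_zero hGQ (hroot x hx)
    refine ⟨Q, hQm, ?_⟩
    rw [aeval_def, eval₂_map] at h1
    convert h1 using 1
    congr 1
    exact RingHom.ext_int _ _
  have hinj : Set.InjOn (fun x : 𝓞 L => (x : L)) ((fun x : 𝓞 L => (x : L)) ⁻¹' R) :=
    fun x _ y _ h => RingOfIntegers.ext h
  refine ⟨L, hL1, hL2, R.preimage (fun x : 𝓞 L => (x : L)) hinj, fun x => c x * (x : L)⁻¹, ?_, ?_⟩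
  · rintro x hx rfl
    rw [Finset.mem_preimage] at hx
    exact hne _ hx (by simp)
  · intro n hn
    obtain ⟨m, rfl⟩ : ∃ m, n = m + 1 := ⟨n - 1, by omega⟩
    rw [hc m, ← Finset.sum_preimage (fun x : 𝓞 L => (x : L)) R hinj (fun x => c x * x ^ m)]
    · refine Finset.sum_congr rfl fun x hx => ?_
      rw [Finset.mem_preimage] at hx
      have := hne _ hx
      field_simp
      ring
    · intro x hx hx2
      exact absurd ⟨⟨x, hint x hx⟩, rfl⟩ hx2

theorem dold_imp_trace (a : ℕ → ℤ) (q : ℚ) (d : ℕ → ℤ) (hq : q ≠ 0) (hd : DoldSeq d)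
    (had : ∀ n : ℕ, 1 ≤ n → (a n : ℚ) = q * (d n : ℚ)) (p : ℕ) (α : ℕ → ℚ) (hp : 1 ≤ p) (h0 : α 0 ≠ 0)
    (hr : ∀ n : ℕ, 1 ≤ n → (a (n + p) : ℚ) = ∑ i ∈ Finset.range p, α i * (a (n + i) : ℚ)) :
    Nonempty (TraceSequenceWitness a) := by
  classical
  have hr' : ∀ n : ℕ, 1 ≤ n → (d (n + p) : ℚ) = ∑ i ∈ Finset.range p, α i * (d (n + i) : ℚ) := by
    intro n hn
    have h1 := hr n hn
    rw [had _ (by omega)] at h1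
    apply mul_left_cancel₀ hq
    rw [h1, Finset.mul_sum]
    refine Finset.sum_congr rfl fun i _ => ?_
    rw [had _ (by omega)]; ring
  obtain ⟨L, hL1, hL2, s, c, hs0, hs⟩ := exists_sum d hd p α hp h0 hr'
  obtain ⟨⟨D, hD⟩, hb⟩ := IsLocalization.exist_integer_multiples (Algebra.algebraMapSubmonoid (𝓞 L) (nonZeroDivisors ℤ)) s c
  obtain ⟨D, hD', rfl⟩ := hD
  have hD0 : (D : L) ≠ 0 := by exact_mod_cast nonZeroDivisors.ne_zero hD'
  have hb2 : ∀ x : 𝓞 L, ∃ g : 𝓞 L, x ∈ s → (g : L) = (D : L) * c x := by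
    intro x
    by_cases hx : x ∈ s
    · obtain ⟨g, hg⟩ := hb x hx
      refine ⟨g, fun _ => ?_⟩
      refine hg.trans ?_
      simp [Algebra.smul_def]
    · exact ⟨0, fun h => absurd h hx⟩
  choose γ hγ using hb2
  have hsum : ∀ n : ℕ, 1 ≤ n → ((D * d n : ℤ) : 𝓞 L) = ∑ x ∈ s, γ x * x ^ n := by
    intro n hn
    apply RingOfIntegers.ext
    have h1 := hs n hn
    simp only [map_intCast, map_sum, map_mul, map_pow]
    push_cast
    rw [h1, Finset.mul_sum]
    refine Finset.sum_congr rfl fun x hx => ?_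
    have h2 := hγ x hx
    change _ = (γ x : L) * (x : L) ^ n
    rw [h2]; ring
  obtain ⟨P₀, hP₀⟩ := gamma_congr L d hd s hs0 γ D hsum
  have hrat : ∀ x : 𝓞 L, ∃ r : ℚ, x ∈ s → c x = algebraMap ℚ L r := by
    intro x
    by_cases hx : x ∈ s
    · obtain ⟨r, hr⟩ := kronecker L (γ x) P₀ (fun p hp hpP q hq hpq => hP₀ p hp hpP q hq hpq x hx)
      refine ⟨r / D, fun _ => ?_⟩
      rw [hγ x hx] at hr
      rw [map_div₀, ← hr, map_intCast]
      field_simp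
    · exact ⟨0, fun h => absurd h hx⟩
  choose r hr2 using hrat
  have hdeg : (Module.finrank ℚ L : ℚ) ≠ 0 := by exact_mod_cast Module.finrank_pos.ne'
  have htr : ∀ n : ℕ, 1 ≤ n → (d n : ℚ) = ∑ x ∈ s, r x / Module.finrank ℚ L * Algebra.trace ℚ L ((x : L) ^ n) := by
    intro n hn
    have h1 := congrArg (Algebra.trace ℚ L) (hs n hn)
    rw [← map_intCast (algebraMap ℚ L), Algebra.trace_algebraMap, map_sum, nsmul_eq_mul] at h1
    apply mul_left_cancel₀ hdeg
    rw [h1, Finset.mul_sum]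
    refine Finset.sum_congr rfl fun x hx => ?_
    rw [hr2 x hx, ← Algebra.smul_def, map_smul, smul_eq_mul]
    field_simp
  refine ⟨⟨L, s.card, fun i => q * (r (s.equivFin.symm i) / Module.finrank ℚ L), fun i => s.equivFin.symm i, ?_⟩⟩
  intro n hn
  rw [had n hn, htr n hn, Finset.mul_sum, ← Finset.sum_coe_sort s, ← Equiv.sum_comp s.equivFin.symm]
  exact Finset.sum_congr rfl fun i _ => by ring

end Helpers

/-- (Minton) An integer linear recurrence sequence is a rational multiple of a Dold
sequence if and only if it is a trace sequence. -/
theorem linearRecurrence_rat_multiple_dold_iff_trace (a : ℕ → ℤ)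
    (hlin : IsLinearRecurrenceSeq a) :
    (∃ (q : ℚ) (d : ℕ → ℤ), q ≠ 0 ∧ DoldSeq d ∧ ∀ n : ℕ, 1 ≤ n → (a n : ℚ) = q * (d n : ℚ)) ↔
      Nonempty (TraceSequenceWitness a) := by
  constructor
  · rintro ⟨q, d, hq, hd, had⟩
    obtain ⟨p, α, hp, h0, hr⟩ := hlin
    exact dold_imp_trace a q d hq hd had p α hp h0 hr
  · rintro ⟨w⟩
    exact trace_imp_dold a w
end

section
/- Let a be a non-negative integer and let (u_n)_{n≥1} be the sequence defined by u_1 = 1, u_2 = a, and u_{n+2} = u_{n+1} + u_n for all n ≥ 1 (so (u_n) = (1, a, 1+a, 1+2a, 2+3a, 3+5a, …)). Then (u_n) is realizable if and only if a = 3. -/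
/-- A sequence of non-negative integers is realizable if for every `n ≥ 1` the Möbius
sum `∑_{d ∣ n} μ(n/d)·a d` is non-negative and divisible by `n`. -/
def Realizable (x : ℕ → ℕ) : Prop :=
  ∀ n : ℕ, 1 ≤ n →
    0 ≤ (∑ d ∈ n.divisors, ArithmeticFunction.moebius (n / d) * (x d : ℤ)) ∧
    (n : ℤ) ∣ ∑ d ∈ n.divisors, ArithmeticFunction.moebius (n / d) * (x d : ℤ)


def fcons (b : Bool) (f : ℕ → Bool) : ℕ → Bool
  | 0 => b
  | (i+1) => f i

def QQ (n : ℕ) (s t : Bool) : Set (ℕ → Bool) :=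
  {f | f 0 = s ∧ f n = t ∧ (∀ i < n, ¬ (f i = true ∧ f (i+1) = true)) ∧ ∀ i, n < i → f i = false}

theorem fcons_inj (b : Bool) : Function.Injective (fcons b) := by
  intro f g h
  funext i
  exact congrFun h (i+1)

theorem fcons_eta (f : ℕ → Bool) : fcons (f 0) (fun i => f (i+1)) = f := by
  funext i; cases i <;> rfl

theorem fcons_mem (n : ℕ) (b t : Bool) (f : ℕ → Bool) :
    fcons b f ∈ QQ (n+1) b t ↔ ¬ (b = true ∧ f 0 = true) ∧ f ∈ QQ n (f 0) t := by
  simp only [QQ, Set.mem_ofPred_eq]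
  constructor
  · rintro ⟨_, h2, h3, h4⟩
    refine ⟨h3 0 (by omega), trivial, h2, fun i hi => h3 (i+1) (by omega), fun i hi => h4 (i+1) (by omega)⟩
  · rintro ⟨h0, _, h2, h3, h4⟩
    refine ⟨rfl, h2, ?_, ?_⟩
    · intro i hi
      cases i with
      | zero => exact h0
      | succ i => exact h3 i (by omega)
    · intro i hi
      cases i with
      | zero => omega
      | succ i => exact h4 i (by omega)

theorem QQ_true (n : ℕ) (t : Bool) : QQ (n+1) true t = fcons true '' QQ n false t := by
  ext f
  constructor
  · intro h
    have h0 : f 0 = true := h.1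
    have e := fcons_eta f
    rw [h0] at e
    rw [← e, fcons_mem] at h
    refine ⟨_, ?_, e⟩
    obtain ⟨h1, h2⟩ := h
    have : f (0+1) = false := by simpa using h1
    simpa [this] using h2
  · rintro ⟨g, hg, rfl⟩
    rw [fcons_mem]
    have : g 0 = false := hg.1
    simp [this, hg]

theorem QQ_false (n : ℕ) (t : Bool) :
    QQ (n+1) false t = fcons false '' (QQ n false t ∪ QQ n true t) := by
  ext f
  constructor
  · intro h
    have h0 : f 0 = false := h.1
    have e := fcons_eta f
    rw [h0] at e
    rw [← e, fcons_mem] at h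
    refine ⟨_, ?_, e⟩
    obtain ⟨h1, h2⟩ := h
    cases h3 : f (0+1)
    · left; simpa [h3] using h2
    · right; simpa [h3] using h2
  · rintro ⟨g, hg, rfl⟩
    rw [fcons_mem]
    rcases hg with hg | hg
    · have : g 0 = false := hg.1
      simp [this, hg]
    · have : g 0 = true := hg.1
      simp [this, hg]

theorem QQ_zero (s t : Bool) : QQ 0 s t = if s = t then {fcons s (fun _ => false)} else ∅ := by
  ext f
  split_ifs with h
  · subst h
    simp only [QQ, Set.mem_ofPred_eq, Set.mem_singleton_iff]
    constructor
    · rintro ⟨h, -, -, h4⟩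
      funext i
      cases i with
      | zero => exact h
      | succ i => exact h4 _ (by omega)
    · rintro rfl
      refine ⟨rfl, rfl, by simp, ?_⟩
      intro i hi
      cases i with
      | zero => omega
      | succ i => rfl
  · simp only [QQ, Set.mem_ofPred_eq, Set.mem_empty_iff_false, iff_false]
    rintro ⟨h1, h2, -⟩
    exact h (h1.symm.trans h2)

theorem QQ_fin (n : ℕ) (t : Bool) : ∀ s, (QQ n s t).Finite := by
  induction n with
  | zero => intro s; rw [QQ_zero]; split_ifs <;> simp
  | succ n ih =>
    intro s
    cases s
    · rw [QQ_false]; exact ((ih _).union (ih _)).image _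
    · rw [QQ_true]; exact (ih _).image _

theorem QQ_disj (n m : ℕ) (t t' : Bool) : Disjoint (QQ n false t) (QQ m true t') := by
  rw [Set.disjoint_left]
  intro f h1 h2
  have := h1.1.symm.trans h2.1
  simp at this

theorem QQ_card_true (n : ℕ) (t : Bool) : (QQ (n+1) true t).ncard = (QQ n false t).ncard := by
  rw [QQ_true, Set.ncard_image_of_injective _ (fcons_inj _)]

theorem QQ_card_false (n : ℕ) (t : Bool) :
    (QQ (n+1) false t).ncard = (QQ n false t).ncard + (QQ n true t).ncard := by
  rw [QQ_false, Set.ncard_image_of_injective _ (fcons_inj _),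
    Set.ncard_union_eq (QQ_disj _ _ _ _) (QQ_fin _ _ _) (QQ_fin _ _ _)]

theorem QQ_ff (n : ℕ) : (QQ n false false).ncard = Nat.fib (n+1) ∧
    (QQ (n+1) false false).ncard = Nat.fib (n+2) := by
  induction n with
  | zero => 
    simp [QQ_card_false, QQ_zero]
  | succ n ih =>
    refine ⟨ih.2, ?_⟩
    rw [QQ_card_false, QQ_card_true, ih.1, ih.2, Nat.fib_add_two (n := n+1), add_comm]

theorem QQ_ft (n : ℕ) : (QQ n false true).ncard = Nat.fib n ∧
    (QQ (n+1) false true).ncard = Nat.fib (n+1) := by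
  induction n with
  | zero => 
    simp [QQ_card_false, QQ_zero]
  | succ n ih =>
    refine ⟨ih.2, ?_⟩
    rw [QQ_card_false, QQ_card_true, ih.1, ih.2, Nat.fib_add_two (n := n), add_comm]

abbrev GX : Type := {f : ℕ → Bool // ∀ i, ¬ (f i = true ∧ f (i+1) = true)}

def GT (f : GX) : GX := ⟨fun i => f.1 (i+1), fun i => f.2 (i+1)⟩

theorem GT_iter (n : ℕ) (f : GX) (i : ℕ) : (GT^[n] f).1 i = f.1 (i+n) := by
  induction n generalizing f with
  | zero => rfl
  | succ n ih => rw [Function.iterate_succ_apply, ih]; simp only [GT]; congr 1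

theorem GT_per (n : ℕ) (f : GX) : Function.IsPeriodicPt GT n f ↔ ∀ i, f.1 (i+n) = f.1 i := by
  unfold Function.IsPeriodicPt Function.IsFixedPt
  rw [Subtype.ext_iff, funext_iff]
  simp only [GT_iter]

def Gtr (n : ℕ) (f : GX) : ℕ → Bool := fun i => if i ≤ n then f.1 i else false

theorem Gtr_bij (n : ℕ) (hn : 1 ≤ n) :
    Set.BijOn (Gtr n) {f | Function.IsPeriodicPt GT n f} (QQ n false false ∪ QQ n true true) := by
  refine ⟨?_, ?_, ?_⟩
  · intro f hf
    have hf : Function.IsPeriodicPt GT n f := hf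
    rw [GT_per] at hf
    have key : Gtr n f ∈ QQ n (f.1 0) (f.1 0) := by
      refine ⟨by simp [Gtr], ?_, ?_, ?_⟩
      · simpa [Gtr] using hf 0
      · intro i hi
        have : i ≤ n := by omega
        have : i + 1 ≤ n := by omega
        simp only [Gtr, *, if_true]
        exact f.2 i
      · intro i hi
        simp [Gtr, hi]
    cases h : f.1 0
    · left; rw [h] at key; exact key
    · right; rw [h] at key; exact key
  · intro f hf g hg h
    have hf : Function.IsPeriodicPt GT n f := hf
    have hg : Function.IsPeriodicPt GT n g := hg
    rw [GT_per] at hf hg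
    have hf' : Function.Periodic f.1 n := hf
    have hg' : Function.Periodic g.1 n := hg
    apply Subtype.ext
    funext i
    rw [← hf'.map_mod_nat i, ← hg'.map_mod_nat i]
    have hi : i % n ≤ n := (Nat.mod_lt _ (by omega)).le
    simpa [Gtr, hi] using congrFun h (i % n)
  · intro g hg
    have hg' : g 0 = g n ∧ (∀ i < n, ¬ (g i = true ∧ g (i+1) = true)) ∧ ∀ i, n < i → g i = false := by
      rcases hg with ⟨h1, h2, h3, h4⟩ | ⟨h1, h2, h3, h4⟩
      · exact ⟨h1.trans h2.symm, h3, h4⟩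
      · exact ⟨h1.trans h2.symm, h3, h4⟩
    obtain ⟨h0, h3, h4⟩ := hg'
    have hs : ∀ i, g ((i+1) % n) = g (i % n + 1) := by
      intro i
      have hi := Nat.mod_lt i (show n > 0 by omega)
      rw [← Nat.mod_add_mod]
      rcases Nat.lt_or_ge (i % n + 1) n with h | h
      · rw [Nat.mod_eq_of_lt h]
      · have : i % n + 1 = n := by omega
        rw [this, Nat.mod_self, h0]
    refine ⟨⟨fun i => g (i % n), ?_⟩, ?_, ?_⟩
    · intro i
      simp only [hs]
      exact h3 _ (Nat.mod_lt _ (by omega))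
    · show Function.IsPeriodicPt _ _ _
      rw [GT_per]
      intro i
      simp
    · funext i
      simp only [Gtr]
      split_ifs with h
      · rcases h.lt_or_eq with h | h
        · rw [Nat.mod_eq_of_lt h]
        · rw [h, Nat.mod_self, h0]
      · exact (h4 i (by omega)).symm

theorem GT_fin (n : ℕ) (hn : 1 ≤ n) : {f | Function.IsPeriodicPt GT n f}.Finite := by
  apply Set.Finite.of_injOn (Gtr_bij n hn).mapsTo (Gtr_bij n hn).injOn
  exact (QQ_fin _ _ _).union (QQ_fin _ _ _)

theorem GT_card (n : ℕ) : {f | Function.IsPeriodicPt GT (n+1) f}.ncard =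
    Nat.fib (n+2) + Nat.fib n := by
  rw [← (Gtr_bij (n+1) (by omega)).injOn.ncard_image, (Gtr_bij (n+1) (by omega)).image_eq,
    Set.ncard_union_eq (QQ_disj _ _ _ _) (QQ_fin _ _ _) (QQ_fin _ _ _), (QQ_ff n).2, QQ_card_true,
    (QQ_ft n).1]

theorem orbit_dvd {X : Type*} (T : X → X) (n : ℕ) (hn : 0 < n)
    (S : Finset X) (hS : ∀ x, x ∈ S ↔ Function.minimalPeriod T x = n) : n ∣ S.card := by
  classical
  rw [Finset.card_eq_sum_card_image (fun x => Function.periodicOrbit T x) S]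
  apply Finset.dvd_sum
  intro b hb
  obtain ⟨x, hx, rfl⟩ := Finset.mem_image.1 hb
  rw [hS] at hx
  have hp : x ∈ Function.periodicPts T := by
    rw [← Function.minimalPeriod_pos_iff_mem_periodicPts, hx]; exact hn
  have : {a ∈ S | Function.periodicOrbit T a = Function.periodicOrbit T x} =
      (Finset.range n).image (fun i => T^[i] x) := by
    ext y
    simp only [Finset.mem_filter, Finset.mem_image, Finset.mem_range, hS]
    constructor
    · rintro ⟨hy, h⟩
      have hpy : y ∈ Function.periodicPts T := by
        rw [← Function.minimalPeriod_pos_iff_mem_periodicPts, hy]; exact hn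
      have h2 := Function.self_mem_periodicOrbit hpy
      rw [h, Function.mem_periodicOrbit_iff hp] at h2
      obtain ⟨m, hm⟩ := h2
      refine ⟨m % n, Nat.mod_lt _ hn, ?_⟩
      rw [← hm, ← hx, Function.iterate_mod_minimalPeriod_eq]
    · rintro ⟨i, -, rfl⟩
      exact ⟨by rw [Function.minimalPeriod_apply_iterate hp, hx],
        Function.periodicOrbit_apply_iterate_eq hp i⟩
  rw [this, Finset.card_image_of_injOn, Finset.card_range]
  intro i hi j hj h
  have hi' : i < n := by simpa using hi
  have hj' : j < n := by simpa using hj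
  rw [← hx] at hi' hj'
  exact Function.iterate_injOn_Iio_minimalPeriod hi' hj' h

theorem realizable_of_map {X : Type*} (T : X → X)
    (hfin : ∀ n, 1 ≤ n → {x | Function.IsPeriodicPt T n x}.Finite)
    (u : ℕ → ℕ) (hu : ∀ n, 1 ≤ n → {x | Function.IsPeriodicPt T n x}.ncard = u n) :
    Realizable u := by
  classical
  have hfin' : ∀ n, 1 ≤ n → {x | Function.minimalPeriod T x = n}.Finite := by
    intro n hn
    apply (hfin n hn).subset
    intro x hx
    have hx : Function.minimalPeriod T x = n := hx
    show Function.IsPeriodicPt T n x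
    rw [← hx]
    exact Function.isPeriodicPt_minimalPeriod T x
  have hsum : ∀ n > 0, ∑ i ∈ n.divisors,
      (({x | Function.minimalPeriod T x = i}.ncard : ℕ) : ℤ) = (u n : ℤ) := by
    intro n hn
    rw [← hu n hn, ← Nat.cast_sum, Set.ncard_eq_toFinset_card _ (hfin n hn)]
    congr 1
    rw [Finset.card_eq_sum_card_fiberwise (f := fun x => Function.minimalPeriod T x)
      (t := n.divisors)]
    · apply Finset.sum_congr rfl
      intro d hd
      have hd' := Nat.mem_divisors.1 hd
      rw [Set.ncard_eq_toFinset_card _ (hfin' d (Nat.pos_of_mem_divisors hd))]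
      congr 1
      ext x
      simp only [Set.Finite.mem_toFinset, Set.mem_ofPred_eq, Finset.mem_filter]
      rw [Function.isPeriodicPt_iff_minimalPeriod_dvd]
      constructor
      · intro h; exact ⟨h ▸ hd'.1, h⟩
      · exact fun h => h.2
    · intro x hx
      have hx : Function.IsPeriodicPt T n x := by simpa using hx
      have := hx.minimalPeriod_dvd
      simp [this, hn.ne']
  rw [ArithmeticFunction.sum_eq_iff_sum_mul_moebius_eq] at hsum
  intro n hn
  have h := hsum n hn
  simp only [Int.cast_id] at h
  rw [Nat.sum_divisorsAntidiagonal' (fun a b => ((ArithmeticFunction.moebius a : ℤ) : ℤ) * (u b : ℤ))] at h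
  rw [h]
  refine ⟨by positivity, ?_⟩
  rw [Int.natCast_dvd_natCast, Set.ncard_eq_toFinset_card _ (hfin' n hn)]
  apply orbit_dvd T n hn
  intro x
  simp

theorem realizable_two_pow (u : ℕ → ℕ) (h : Realizable u) (k : ℕ) :
    ((2 ^ (k+1) : ℕ) : ℤ) ∣ (u (2^(k+1)) : ℤ) - u (2^k) := by
  obtain ⟨-, h⟩ := h (2^(k+1)) Nat.one_le_two_pow
  have key : ∀ n > 0, ∑ i ∈ n.divisors,
      (∑ d ∈ i.divisors, ArithmeticFunction.moebius (i / d) * (u d : ℤ)) = (u n : ℤ) := by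
    rw [ArithmeticFunction.sum_eq_iff_sum_mul_moebius_eq]
    intro n hn
    simp only [Int.cast_id]
    rw [Nat.sum_divisorsAntidiagonal' (fun a b => ((ArithmeticFunction.moebius a : ℤ) : ℤ) * (u b : ℤ))]
  have e1 := key (2^(k+1)) (by positivity)
  have e2 := key (2^k) (by positivity)
  rw [Nat.sum_divisors_prime_pow Nat.prime_two] at e1 e2
  rw [Finset.sum_range_succ, e2] at e1
  rw [← e1]
  simpa using h

theorem u_formula (a : ℕ) (u : ℕ → ℕ) (h1 : u 1 = 1) (h2 : u 2 = a)
    (hrec : ∀ n : ℕ, 1 ≤ n → u (n + 2) = u (n + 1) + u n) (n : ℕ) :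
    (u (n+1) : ℤ) = Nat.fib (n+2) + Nat.fib n + ((a : ℤ) - 3) * Nat.fib n ∧
    (u (n+2) : ℤ) = Nat.fib (n+3) + Nat.fib (n+1) + ((a : ℤ) - 3) * Nat.fib (n+1) := by
  induction n with
  | zero => simp [h1, h2, Nat.fib_add_two]
  | succ n ih =>
    refine ⟨ih.2, ?_⟩
    rw [hrec (n+1) (by omega)]
    push_cast
    rw [ih.1, ih.2, Nat.fib_add_two (n := n+2), Nat.fib_add_two (n := n)]
    push_cast
    ring

theorem lucas_realizable (u : ℕ → ℕ) (h : ∀ n, u (n+1) = Nat.fib (n+2) + Nat.fib n) :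
    Realizable u := by
  apply realizable_of_map GT GT_fin
  intro n hn
  obtain ⟨m, rfl⟩ := Nat.exists_eq_add_of_le' hn
  rw [h, GT_card]

theorem fib_even_iff (m : ℕ) : 2 ∣ Nat.fib m ↔ 3 ∣ m := by
  have h := Nat.fib_gcd m 3
  constructor
  · intro h2
    have h3 : Nat.gcd (Nat.fib m) (Nat.fib 3) = 2 := Nat.gcd_eq_right h2
    rw [h3] at h
    by_contra hc
    have : Nat.gcd m 3 = 1 :=
      ((Nat.Prime.coprime_iff_not_dvd Nat.prime_three).2 hc).symm
    rw [this] at h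
    simp at h
  · intro h3
    exact Nat.fib_dvd 3 m h3

theorem fib_diff_odd (k : ℕ) :
    IsCoprime (2 : ℤ) ((Nat.fib (2^(k+1) - 1) : ℤ) - Nat.fib (2^k - 1)) := by
  have hp : (1:ℕ) ≤ 2^k := Nat.one_le_two_pow
  have h3 : 2^k % 3 = 1 ∨ 2^k % 3 = 2 := by
    clear hp
    induction k with
    | zero => simp
    | succ k ih => rw [pow_succ]; omega
  have e1 := fib_even_iff (2^(k+1) - 1)
  have e2 := fib_even_iff (2^k - 1)
  rw [pow_succ] at *
  rw [Int.isCoprime_iff_gcd_eq_one, ← Int.isCoprime_iff_gcd_eq_one,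
    Prime.coprime_iff_not_dvd Int.prime_two]
  omega

theorem fibonacci_type_realizable_iff_lucas (a : ℕ) (u : ℕ → ℕ)
    (h1 : u 1 = 1) (h2 : u 2 = a)
    (hrec : ∀ n : ℕ, 1 ≤ n → u (n + 2) = u (n + 1) + u n) :
    Realizable u ↔ a = 3 := by
  have hu := fun n => (u_formula a u h1 h2 hrec n).1
  constructor
  · intro hr
    have hL : Realizable (fun n => Nat.fib (n+1) + Nat.fib (n-1)) :=
      lucas_realizable _ (fun n => rfl)
    have hall : ∀ k : ℕ, (2:ℤ)^(k+1) ∣ (a:ℤ) - 3 := by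
      intro k
      have d1 := realizable_two_pow u hr k
      have d2 := realizable_two_pow _ hL k
      have hu' : ∀ m : ℕ, (u (2^m) : ℤ) = (Nat.fib (2^m+1) + Nat.fib (2^m-1) : ℕ) +
          ((a : ℤ) - 3) * Nat.fib (2^m-1) := by
        intro m
        have hm : (1:ℕ) ≤ 2^m := Nat.one_le_two_pow
        obtain ⟨j, hj⟩ := Nat.exists_eq_add_of_le' hm
        rw [hj, hu]
        simp
      have d3 := dvd_sub d1 d2
      rw [hu', hu'] at d3
      have d4 : (2:ℤ)^(k+1) ∣ ((a:ℤ) - 3) *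
          ((Nat.fib (2^(k+1) - 1) : ℤ) - Nat.fib (2^k - 1)) := by
        rw [Nat.cast_pow, Nat.cast_two] at d3
        refine d3.trans (dvd_of_eq ?_)
        ring
      exact ((fib_diff_odd k).pow_left).dvd_of_dvd_mul_right d4
    by_contra hne
    have hz : (a:ℤ) - 3 ≠ 0 := by omega
    have hle := Int.le_of_dvd (abs_pos.2 hz) ((dvd_abs _ _).2 (hall (a+3)))
    have hlt : a + 3 < 2^(a+3) := Nat.lt_two_pow_self
    have hlt' : ((a:ℤ) + 3) < 2^(a+3) := by exact_mod_cast hlt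
    have : |(a:ℤ) - 3| ≤ a + 3 := by rw [abs_le]; constructor <;> omega
    rw [pow_succ] at hle
    omega
  · intro ha
    apply lucas_realizable
    intro n
    have := hu n
    rw [ha] at this
    push_cast at this
    have h' : (u (n+1) : ℤ) = ((Nat.fib (n+2) + Nat.fib n : ℕ) : ℤ) := by
      push_cast; linarith
    exact_mod_cast h'
end

section
/- Let σ : ℕ → ℕ (where ℕ = {1, 2, 3, …}) be a surjective map with the property that for every realizable sequence (a_n)_{n≥1}, the sequence (a_{σ(n)})_{n≥1} is also realizable. Then σ(n) = n for every n ≥ 1. -/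
theorem real_of_orbits (x : ℕ → ℕ) (b : ℕ → ℤ) (h0 : ∀ n : ℕ, 0 < n → 0 ≤ b n)
    (h1 : ∀ n : ℕ, 0 < n → (n : ℤ) ∣ b n)
    (h2 : ∀ n : ℕ, 0 < n → ∑ d ∈ n.divisors, b d = (x n : ℤ)) : Realizable x := by
  intro n hn
  have h := (ArithmeticFunction.sum_eq_iff_sum_mul_moebius_eq (R := ℤ) (f := b)
    (g := fun n => (x n : ℤ))).1 h2 n hn
  simp only [Int.cast_id] at h
  rw [Nat.sum_divisorsAntidiagonal'
    (f := fun i j => ArithmeticFunction.moebius i * (x j : ℤ))] at h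
  rw [h]
  exact ⟨h0 n hn, h1 n hn⟩

theorem orbits_of_real (x : ℕ → ℕ) (hx : Realizable x) : ∃ b : ℕ → ℤ,
    (∀ n : ℕ, 0 < n → 0 ≤ b n) ∧ (∀ n : ℕ, 0 < n → (n : ℤ) ∣ b n) ∧
    (∀ n : ℕ, 0 < n → ∑ d ∈ n.divisors, b d = (x n : ℤ)) := by
  refine ⟨fun n => ∑ d ∈ n.divisors, ArithmeticFunction.moebius (n / d) * (x d : ℤ),
    fun n hn => (hx n hn).1, fun n hn => (hx n hn).2, ?_⟩
  refine (ArithmeticFunction.sum_eq_iff_sum_mul_moebius_eq (R := ℤ)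
    (g := fun n => (x n : ℤ))).2 ?_
  intro n hn
  simp only [Int.cast_id]
  rw [Nat.sum_divisorsAntidiagonal'
    (f := fun i j => ArithmeticFunction.moebius i * (x j : ℤ))]

theorem gen_real (k : ℕ) (hk : 0 < k) : Realizable (fun n => if k ∣ n then k else 0) := by
  refine real_of_orbits _ (fun n => if k = n then (k : ℤ) else 0) ?_ ?_ ?_
  · intro n _
    split_ifs <;> simp
  · intro n _
    split_ifs with h
    · simp [h]
    · simp
  · intro n hn
    rw [Finset.sum_ite_eq]
    simp [hn.ne']

/-- The only surjective self-map of `{1, 2, 3, …}` which preserves realizability of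
sequences under time-change is the identity. -/
theorem surjective_realizability_preserving_time_change_is_id (σ : ℕ → ℕ)
    (hpos : ∀ n : ℕ, 1 ≤ n → 1 ≤ σ n)
    (hsurj : ∀ m : ℕ, 1 ≤ m → ∃ n : ℕ, 1 ≤ n ∧ σ n = m)
    (hpres : ∀ a : ℕ → ℕ, Realizable a → Realizable (fun n => a (σ n))) :
    ∀ n : ℕ, 1 ≤ n → σ n = n := by
  have key : ∀ k, 0 < k → ∃ b : ℕ → ℤ,
    (∀ n : ℕ, 0 < n → 0 ≤ b n) ∧ (∀ n : ℕ, 0 < n → (n : ℤ) ∣ b n) ∧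
    (∀ n : ℕ, 0 < n → ∑ d ∈ n.divisors, b d = if k ∣ σ n then (k : ℤ) else 0) := by
    intro k hk
    obtain ⟨b, h0, h1, h2⟩ := orbits_of_real _ (hpres _ (gen_real k hk))
    refine ⟨b, h0, h1, fun n hn => ?_⟩
    rw [h2 n hn]
    push_cast
    rfl
  have mono : ∀ d n, 0 < n → d ∣ n → σ d ∣ σ n := by
    intro d n hn hd
    have hd0 : 0 < d := Nat.pos_of_dvd_of_pos hd hn
    have hs := hpos d hd0
    obtain ⟨b, h0, h1, h2⟩ := key (σ d) hs
    by_contra hc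
    have e1 := h2 d hd0
    have e2 := h2 n hn
    rw [if_pos dvd_rfl] at e1
    rw [if_neg hc] at e2
    have := Finset.sum_le_sum_of_subset_of_nonneg (f := b) (Nat.divisors_subset_of_dvd hn.ne' hd)
      (fun i hi _ => h0 i (Nat.pos_of_mem_divisors hi))
    omega
  have main : ∀ k, 0 < k → ∃ m, 0 < m ∧ m ∣ k ∧ σ m = k := by
    intro k hk
    obtain ⟨n, hn, hnk⟩ := hsurj k hk
    have hex : ∃ m, m ∣ n ∧ k ∣ σ m := ⟨n, dvd_rfl, by rw [hnk]⟩
    classical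
    obtain ⟨hmn, hkm⟩ := Nat.find_spec hex
    have hmin := fun j => Nat.find_min hex (m := j)
    generalize Nat.find hex = m at hmn hkm hmin
    have hm : 0 < m := Nat.pos_of_dvd_of_pos hmn hn
    obtain ⟨b, h0, h1, h2⟩ := key k hk
    have e := h2 m hm
    rw [if_pos hkm, Finset.sum_eq_single m] at e
    · refine ⟨m, hm, ?_, ?_⟩
      · have := h1 m hm
        rw [e] at this
        exact_mod_cast this
      · have := mono m n hn hmn
        rw [hnk] at this
        exact Nat.dvd_antisymm this hkm
    · intro d hd hne
      have hdm := Nat.dvd_of_mem_divisors hd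
      have hd0 := Nat.pos_of_mem_divisors hd
      have hlt : d < m := lt_of_le_of_ne (Nat.le_of_dvd hm hdm) hne
      have e3 := h2 d hd0
      rw [if_neg (fun h => hmin d hlt ⟨hdm.trans hmn, h⟩)] at e3
      exact (Finset.sum_eq_zero_iff_of_nonneg
        (fun i hi => h0 i (Nat.pos_of_mem_divisors hi))).1 e3 d (by simp [hd0.ne'])
    · intro h
      exact absurd (Nat.mem_divisors_self m hm.ne') h
  intro n
  induction n using Nat.strong_induction_on with
  | _ n ih =>
    intro hn
    obtain ⟨m, hm, hmn, hs⟩ := main n hn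
    rcases (Nat.le_of_dvd hn hmn).lt_or_eq with h | h
    · have := ih m h hm
      omega
    · rw [h] at hs
      exact hs
end

section
/- For all positive integers k and ℓ, if (a_n)_{n≥1} is a realizable sequence, then the sequence (a_{ℓ·n^k})_{n≥1} is also realizable. In other words, every monomial map n ↦ ℓ·n^k is a universally realizability-preserving time-change. -/
theorem exists_gen (k l : ℕ) (hk : 1 ≤ k) (m : ℕ) :
    ∃ e : ℕ, 1 ≤ m → 1 ≤ e ∧ e ∣ m ∧ ∀ d : ℕ, 1 ≤ d → (m ∣ l * d ^ k ↔ e ∣ d) := by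
  classical
  by_cases hm : 1 ≤ m
  swap
  · exact ⟨0, fun h => absurd h hm⟩
  have hmm : m ∣ l * m ^ k := Dvd.dvd.mul_left (dvd_pow_self m (by omega)) l
  have hex : ∃ e : ℕ, 1 ≤ e ∧ m ∣ l * e ^ k := ⟨m, hm, hmm⟩
  obtain ⟨h1, h2⟩ := Nat.find_spec hex
  have key : ∀ d : ℕ, 1 ≤ d → m ∣ l * d ^ k → Nat.find hex ∣ d := by
    intro d hd h
    have hg : m ∣ l * (Nat.gcd (Nat.find hex) d) ^ k := by
      rw [← Nat.pow_gcd_pow, ← Nat.gcd_mul_left]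
      exact Nat.dvd_gcd h2 h
    have hle := Nat.find_min' hex ⟨Nat.gcd_pos_of_pos_left d h1, hg⟩
    have hle2 := Nat.le_of_dvd h1 (Nat.gcd_dvd_left (Nat.find hex) d)
    have heq := le_antisymm hle2 hle
    have := Nat.gcd_dvd_right (Nat.find hex) d
    rwa [heq] at this
  refine ⟨Nat.find hex, fun _ => ⟨h1, key m hm hmm, fun d hd => ⟨key d hd, fun h => ?_⟩⟩⟩
  exact h2.trans (Nat.mul_dvd_mul_left l (pow_dvd_pow_of_dvd h k))

theorem conv_eq (n : ℕ) (x : ℕ → ℕ) :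
    ∑ p ∈ n.divisorsAntidiagonal, ArithmeticFunction.moebius p.1 * (x p.2 : ℤ) =
    ∑ d ∈ n.divisors, ArithmeticFunction.moebius (n / d) * (x d : ℤ) :=
  Nat.sum_divisorsAntidiagonal' (fun i j => ArithmeticFunction.moebius i * (x j : ℤ))

/-- Every monomial map `n ↦ ℓ·n^k` (with `k, ℓ ≥ 1`) is a universally
realizability-preserving time-change: if `(a n)` is realizable then so is
`(a (ℓ·n^k))`. -/
theorem monomial_time_change_preserves_realizability (k l : ℕ) (hk : 1 ≤ k) (hl : 1 ≤ l)
    (a : ℕ → ℕ) (ha : Realizable a) :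
    Realizable (fun n => a (l * n ^ k)) := by
  classical
  choose e he using exists_gen k l hk
  obtain ⟨b, hb⟩ : ∃ b : ℕ → ℤ, ∀ n, b n =
    ∑ d ∈ n.divisors, ArithmeticFunction.moebius (n / d) * (a d : ℤ) := ⟨_, fun _ => rfl⟩
  have hab : ∀ n > 0, ∑ i ∈ n.divisors, b i = (a n : ℤ) := by
    refine (ArithmeticFunction.sum_eq_iff_sum_mul_moebius_eq (f := b)
      (g := fun n => (a n : ℤ))).2 ?_
    intro n hn
    rw [hb]
    exact_mod_cast conv_eq n a
  obtain ⟨B, hB⟩ : ∃ B : ℕ → ℤ, ∀ n, B n =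
    ∑ m ∈ (l * n ^ k).divisors with e m = n, b m := ⟨_, fun _ => rfl⟩
  have hBa : ∀ n > 0, ∑ i ∈ n.divisors, B i = (a (l * n ^ k) : ℤ) := by
    intro n hn
    have hpos : 0 < l * n ^ k := by positivity
    rw [← hab _ hpos, ← Finset.sum_fiberwise_of_maps_to (s := (l * n ^ k).divisors) (t := n.divisors) (g := e)]
    · refine Finset.sum_congr rfl fun d hd => ?_
      have hdn := Nat.dvd_of_mem_divisors hd
      have hd0 : 0 < d := Nat.pos_of_mem_divisors hd
      have hposd : 0 < l * d ^ k := by positivity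
      rw [hB]
      refine Finset.sum_congr ?_ fun _ _ => rfl
      ext m
      simp only [Finset.mem_filter, Nat.mem_divisors]
      constructor
      · rintro ⟨⟨h, -⟩, h'⟩
        exact ⟨⟨h.trans (Nat.mul_dvd_mul_left l (pow_dvd_pow_of_dvd hdn k)), hpos.ne'⟩, h'⟩
      · rintro ⟨⟨h, -⟩, h'⟩
        refine ⟨⟨?_, hposd.ne'⟩, h'⟩
        exact ((he m (Nat.pos_of_dvd_of_pos h hpos)).2.2 d hd0).2 (h' ▸ dvd_rfl)
    · intro m hm
      have h := Nat.dvd_of_mem_divisors hm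
      exact Nat.mem_divisors.2
        ⟨((he m (Nat.pos_of_dvd_of_pos h hpos)).2.2 n hn).1 h, hn.ne'⟩
  have hinv := (ArithmeticFunction.sum_eq_iff_sum_mul_moebius_eq (f := B)
      (g := fun n => (a (l * n ^ k) : ℤ))).1 hBa
  intro n hn
  have h1 : ∑ d ∈ n.divisors, ArithmeticFunction.moebius (n / d) *
      (((fun n => a (l * n ^ k)) d : ℕ) : ℤ) = B n := by
    rw [← hinv n hn, ← conv_eq]
    simp
  rw [h1, hB]
  constructor
  · refine Finset.sum_nonneg fun m hm => ?_
    rw [hb]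
    exact (ha m (Nat.pos_of_mem_divisors (Finset.mem_filter.1 hm).1)).1
  · refine Finset.dvd_sum fun m hm => ?_
    obtain ⟨hm1, hm2⟩ := Finset.mem_filter.1 hm
    have hm0 := Nat.pos_of_mem_divisors hm1
    have hnm : n ∣ m := hm2 ▸ (he m hm0).2.1
    rw [hb]
    exact (Int.natCast_dvd_natCast.2 hnm).trans (ha m hm0).2
end
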